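/- arXiv:math/0307161 — 7 statements merged into one kernel-verified Lean document; each statement's English description precedes it below -/
import Mathlib

section
/- Let R ⊆ S be a module-finite extension of Noetherian integral domains containing a field of characteristic p > 0, let I ⊆ R be an ideal, and let f ∈ R be an element such that f ∈ IS. Then f belongs to the tight closure I^* of I in R. -/
/-!
Tight closure captures plus closure. The fraction field `Frac S` is a vector space over `Frac R`,
so some functional on it is nonzero at `1`. Restricting it to the finitely generated module `S` and
clearing denominators gives an `R`-linear map `ψ : S → R` with `c := ψ 1 ≠ 0`
(`exists_linearMap_one_ne_zero`).

If `f ∈ IS`, then applying Frobenius on `S` gives `f ^ q ∈ I^[q] S` (`map_pow_mem_map_bracketPow`).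
Applying `ψ`, which sends `JS` into `J` for each ideal `J` of `R`, gives
`c * f ^ q = ψ (f ^ q) ∈ I^[q]`.
-/

/-- The Frobenius power `I^[q]` of an ideal: the ideal generated by all `q`-th powers of
elements of `I`. -/
def bracketPow {R : Type} [CommRing R] (I : Ideal R) (q : ℕ) : Ideal R :=
  Ideal.span ((fun a => a ^ q) '' (I : Set R))

/-- The tight closure of an ideal `I` in a (domain) of characteristic `p`:
`f ∈ I^*` iff there is `c ≠ 0` with `c * f^q ∈ I^[q]` for all sufficiently large `q = p^e`. -/
def tightClosure {R : Type} [CommRing R] (p : ℕ) (I : Ideal R) : Set R :=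
  {f | ∃ c : R, c ≠ 0 ∧ ∃ e₀ : ℕ, ∀ e ≥ e₀, c * f ^ p ^ e ∈ bracketPow I (p ^ e)}

/-- A module-finite domain extension `S` of a Noetherian domain `R` has an `R`-linear functional
that is nonzero at `1`. -/
theorem exists_linearMap_one_ne_zero (R S : Type) [CommRing R] [CommRing S] [IsDomain R]
    [IsDomain S] [IsNoetherianRing R] [Algebra R S] [Module.Finite R S] [FaithfulSMul R S] :
    ∃ ψ : S →ₗ[R] R, ψ 1 ≠ 0 := by
  let K := FractionRing R
  let L := FractionRing S
  let : Algebra K L := FractionRing.liftAlgebra R L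
  have hone : ∃ g : L →ₗ[K] K, g 1 ≠ 0 := by
    by_contra! h
    exact one_ne_zero ((Module.forall_dual_apply_eq_zero_iff K (1 : L)).1 h)
  obtain ⟨g, hg⟩ := hone
  let g' : S →ₗ[R] K := (g.restrictScalars R) ∘ₗ (IsScalarTower.toAlgHom R S L).toLinearMap
  have : Module.FinitePresentation R S := Module.finitePresentation_of_finite R S
  -- `S` is finitely presented over `R`, so a multiple of `g'` takes values in `R`.
  obtain ⟨ψ, s, hψ⟩ := Module.FinitePresentation.exists_lift_of_isLocalizedModule
    (nonZeroDivisors R) (Algebra.linearMap R K) g'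
  refine ⟨ψ, fun h => ?_⟩
  have h1 := LinearMap.congr_fun hψ 1
  have h2 : (s : R) • g 1 = 0 := by
    simpa [g', h, Submonoid.smul_def] using h1.symm
  exact (smul_ne_zero (nonZeroDivisors.ne_zero s.2) hg) h2

/-- Frobenius on `S` sends `IS` into `I^[q] S`. -/
theorem map_pow_mem_map_bracketPow {R S : Type} [CommRing R] [CommRing S] (p : ℕ) [Fact p.Prime]
    [CharP S p] (φ : R →+* S) (I : Ideal R) (e : ℕ) {x : S} (hx : x ∈ I.map φ) :
    x ^ p ^ e ∈ (bracketPow I (p ^ e)).map φ := by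
  have hle : I.map φ ≤ ((bracketPow I (p ^ e)).map φ).comap (iterateFrobenius S p e) := by
    rw [Ideal.map_le_iff_le_comap]
    intro a ha
    rw [Ideal.mem_comap, Ideal.mem_comap, iterateFrobenius_def, ← map_pow]
    exact Ideal.mem_map_of_mem φ (Ideal.subset_span ⟨a, ha, rfl⟩)
  simpa [Ideal.mem_comap, iterateFrobenius_def] using hle hx

/-- If `R ⊆ S` is a module-finite extension of Noetherian domains of
characteristic `p > 0`, `I ⊆ R` an ideal and `f ∈ R` with `f ∈ IS`, then `f ∈ I^*`. -/
theorem statement0 (R S : Type) [CommRing R] [CommRing S] [IsDomain R] [IsDomain S]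
    [IsNoetherianRing R] [IsNoetherianRing S]
    (p : ℕ) [Fact p.Prime] [CharP R p]
    (φ : R →+* S) (hinj : Function.Injective φ) (hfin : φ.Finite)
    (I : Ideal R) (f : R) (hf : φ f ∈ I.map φ) :
    f ∈ tightClosure p I := by
  let _ := φ.toAlgebra
  have : Module.Finite R S := hfin
  have : FaithfulSMul R S := (faithfulSMul_iff_algebraMap_injective R S).2 hinj
  have : CharP S p := charP_of_injective_ringHom hinj p
  obtain ⟨ψ, hψ⟩ := exists_linearMap_one_ne_zero R S
  refine ⟨ψ 1, hψ, 0, fun e _ => ?_⟩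
  have hmem := map_pow_mem_map_bracketPow p φ I e hf
  -- By linearity, `ψ` sends `JS = J • ⊤` into `J`.
  have hψJ : ∀ (J : Ideal R) (x : S), x ∈ J.map φ → ψ x ∈ J := by
    intro J x hx
    have hx' : x ∈ J • (⊤ : Submodule R S) := by
      rw [Ideal.smul_top_eq_map]
      exact hx
    refine Submodule.smul_induction_on hx' (fun r hr n _ => ?_) (fun x y hx hy => ?_)
    · rw [map_smul, smul_eq_mul]
      exact J.mul_mem_right _ hr
    · rw [map_add]
      exact J.add_mem hx hy
  have h := hψJ _ _ hmem
  have heq : φ f ^ p ^ e = (f ^ p ^ e) • (1 : S) := by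
    rw [← map_pow, Algebra.smul_def, mul_one]
    rfl
  rwa [heq, map_smul, smul_eq_mul, mul_comm] at h
end

section
/- Let R ⊆ S be a module-finite extension of Noetherian integral domains. Then there exists an R-module homomorphism φ : S → R with φ(1) ≠ 0 (that is, S is a solid R-algebra). -/
/-!
Let `K ⊆ L` be the fraction fields of `R ⊆ S`. The inclusion `K → L` of `K`-vector spaces splits,
and restricting a splitting to `S` gives an `R`-linear map `g : S → K` with `g 1 = 1`. As `S` is a
finitely generated `R`-module, some nonzero `d : R` is a common denominator for the values of `g`
on generators, so `d • g` takes values in `R` and sends `1` to `d ≠ 0`.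
-/

/-- A module-finite extension `R ⊆ S` of Noetherian integral domains is a
solid `R`-algebra: there is an `R`-module homomorphism `φ : S → R` with `φ(1) ≠ 0`. -/
theorem statement1 (R S : Type) [CommRing R] [CommRing S] [IsDomain R] [IsDomain S]
    [IsNoetherianRing R] [IsNoetherianRing S]
    [Algebra R S] (hinj : Function.Injective (algebraMap R S)) [Module.Finite R S] :
    ∃ φ : S →ₗ[R] R, φ 1 ≠ 0 := by
  let K := FractionRing R
  let L := FractionRing S
  have : FaithfulSMul R S := (faithfulSMul_iff_algebraMap_injective R S).2 hinj
  have : FaithfulSMul R L := (faithfulSMul_iff_algebraMap_injective R L).2 <| by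
    rw [IsScalarTower.algebraMap_eq R S L]
    exact (IsFractionRing.injective S L).comp hinj
  letI : Algebra K L := FractionRing.liftAlgebra R L
  obtain ⟨f, hf⟩ := (Algebra.linearMap K L).exists_leftInverse_of_injective
    (LinearMap.ker_eq_bot.2 (algebraMap K L).injective)
  have hf1 : f 1 = 1 := by simpa using LinearMap.congr_fun hf 1
  let g : S →ₗ[R] K := (f.restrictScalars R) ∘ₗ (IsScalarTower.toAlgHom R S L).toLinearMap
  have hg1 : g 1 = 1 := by simp [g, hf1]
  obtain ⟨s, hs⟩ := Module.Finite.fg_top (R := R) (M := S)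
  obtain ⟨d, hd⟩ := IsLocalization.exist_integer_multiples (nonZeroDivisors R) s g
  have hmem : ∀ x, ((d : R) • g) x ∈ LinearMap.range (Algebra.linearMap R K) := by
    have hle : Submodule.span R (s : Set S) ≤
        (LinearMap.range (Algebra.linearMap R K)).comap ((d : R) • g) := by
      refine Submodule.span_le.2 fun x hx => ?_
      obtain ⟨r, hr⟩ := hd x hx
      exact ⟨r, hr⟩
    intro x
    exact hle (hs ▸ Submodule.mem_top)
  let e := LinearEquiv.ofInjective (Algebra.linearMap R K) (IsFractionRing.injective R K)
  refine ⟨e.symm.toLinearMap ∘ₗ ((d : R) • g).codRestrict _ hmem, fun h => ?_⟩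
  have h0 : ((d : R) • g) 1 = 0 := by
    simpa using congrArg Subtype.val ((LinearEquiv.map_eq_zero_iff e.symm).1 h)
  rw [LinearMap.smul_apply, hg1, Algebra.smul_def, mul_one] at h0
  exact nonZeroDivisors.ne_zero d.2
    ((map_eq_zero_iff _ (IsFractionRing.injective R K)).1 h0)
end

section
/- Let R be a Noetherian integral domain containing a field of characteristic p > 0, let S be an R-algebra, and suppose there exists an R-module homomorphism φ : S → R with φ(1) ≠ 0. If I ⊆ R is an ideal and f ∈ R satisfies f ∈ IS, then f belongs to the tight closure I^*. -/
/-- If `S` is a solid algebra over the Noetherian domain `R` of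
characteristic `p > 0` (there is an `R`-linear map `ψ : S → R` with `ψ(1) ≠ 0`), and
`f ∈ IS`, then `f ∈ I^*`. -/
theorem statement2 (R : Type) [CommRing R] [IsDomain R] [IsNoetherianRing R]
    (p : ℕ) [Fact p.Prime] [CharP R p]
    (S : Type) [CommRing S] [Algebra R S]
    (ψ : S →ₗ[R] R) (hψ : ψ 1 ≠ 0)
    (I : Ideal R) (f : R) (hf : algebraMap R S f ∈ I.map (algebraMap R S)) :
    f ∈ tightClosure p I := by
  have : Nontrivial S := ⟨1, 0, fun h => hψ (by rw [h, map_zero])⟩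
  have : CharP S p := (CharP.charP_iff_prime_eq_zero Fact.out).2 (by
    rw [← map_natCast (algebraMap R S), CharP.cast_eq_zero, map_zero])
  refine ⟨ψ 1, hψ, 0, fun e _ => ?_⟩
  -- The factor `s` makes the claim stable under multiplying `x` by elements of `S`.
  have key : ∀ x ∈ I.map (algebraMap R S), ∀ s : S,
      ψ (s * x ^ p ^ e) ∈ bracketPow I (p ^ e) := by
    intro x hx
    induction hx using Submodule.span_induction with
    | mem x hx =>
      obtain ⟨a, ha, rfl⟩ := hx
      intro s
      rw [← map_pow, mul_comm, ← Algebra.smul_def, map_smul, smul_eq_mul]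
      exact Ideal.mul_mem_right _ _ (Ideal.subset_span ⟨a, ha, rfl⟩)
    | zero =>
      intro s
      rw [zero_pow (pow_ne_zero _ (Fact.out : p.Prime).ne_zero), mul_zero, map_zero]
      exact zero_mem _
    | add x y _ _ hx hy =>
      intro s
      rw [add_pow_char_pow, mul_add, map_add]
      exact add_mem (hx s) (hy s)
    | smul a x _ hx =>
      intro s
      rw [smul_eq_mul, mul_pow, ← mul_assoc]
      exact hx _
  have h := key _ hf 1
  rwa [one_mul, ← map_pow, Algebra.algebraMap_eq_smul_one, map_smul, smul_eq_mul, mul_comm] at h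
end

section
/- Let R be a commutative ring, let f_0, f_1, …, f_n ∈ R, and let A = R[T_1,…,T_n]/(f_1T_1 + ⋯ + f_nT_n + f_0) be the forcing algebra. Then the following are equivalent: (i) f_0 ∈ (f_1,…,f_n); (ii) there exists an R-algebra homomorphism A → R; (iii) A is isomorphic as an R-algebra to the relation algebra R[T_1,…,T_n]/(f_1T_1 + ⋯ + f_nT_n). -/
/-!
An `R`-algebra homomorphism from the forcing algebra to `R` is a solution `t` in `R` of
`∑ f_i t_i + f_0 = 0`, and such a solution exhibits `f_0` as an element of `(f_1, …, f_n)`.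
Conversely, if `f_0 = ∑ c_i f_i`, the translation `T_i ↦ T_i - c_i` of the polynomial ring
carries the inhomogeneous equation to the homogeneous one, so the two quotients are isomorphic.
The relation algebra always maps to `R`, by evaluation at the origin.
-/

open MvPolynomial

/-- The forcing algebra `R[T_1,…,T_n]/(f_1 T_1 + ⋯ + f_n T_n + f_0)` for the forcing data
`f_1, …, f_n; f_0`. -/
abbrev forcingAlgebra (R : Type) [CommRing R] (n : ℕ) (f : Fin n → R) (f0 : R) : Type :=
  MvPolynomial (Fin n) R ⧸
    Ideal.span {(∑ i, MvPolynomial.C (f i) * MvPolynomial.X i) + MvPolynomial.C f0}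

/-- The relation algebra `R[T_1,…,T_n]/(f_1 T_1 + ⋯ + f_n T_n)`. -/
abbrev relationAlgebra (R : Type) [CommRing R] (n : ℕ) (f : Fin n → R) : Type :=
  MvPolynomial (Fin n) R ⧸
    Ideal.span {∑ i, MvPolynomial.C (f i) * MvPolynomial.X i}

/-- The translation `T_i ↦ T_i - c_i` as an automorphism of the polynomial algebra. -/
noncomputable def translateEquiv (R : Type) [CommRing R] (n : ℕ) (c : Fin n → R) :
    MvPolynomial (Fin n) R ≃ₐ[R] MvPolynomial (Fin n) R :=
  AlgEquiv.ofAlgHom (aeval fun i => X i - C (c i)) (aeval fun i => X i + C (c i))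
    (by ext i; simp [MvPolynomial.algHom_C]) (by ext i; simp [MvPolynomial.algHom_C])

/-- For elements `f_0, f_1, …, f_n` of a commutative ring `R` with forcing
algebra `A`, the following are equivalent: (i) `f_0 ∈ (f_1,…,f_n)`; (ii) there is an
`R`-algebra homomorphism `A → R`; (iii) `A` is isomorphic as an `R`-algebra to the relation
algebra `R[T_1,…,T_n]/(f_1T_1 + ⋯ + f_nT_n)`. -/
theorem statement3 (R : Type) [CommRing R] (n : ℕ) (f : Fin n → R) (f0 : R) :
    List.TFAE [
      f0 ∈ Ideal.span (Set.range f),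
      Nonempty (forcingAlgebra R n f f0 →ₐ[R] R),
      Nonempty (forcingAlgebra R n f f0 ≃ₐ[R] relationAlgebra R n f)] := by
  tfae_have 1 → 3 := by
    intro h
    obtain ⟨c, hc⟩ := (Submodule.mem_span_range_iff_exists_fun R).1 h
    refine ⟨Ideal.quotientEquivAlg _ _ (translateEquiv R n c) ?_⟩
    have hf : ∑ i, (C (f i) * C (c i) : MvPolynomial (Fin n) R) = C f0 := by
      rw [← hc, map_sum]
      exact Finset.sum_congr rfl fun i _ => by rw [smul_eq_mul, mul_comm, map_mul]
    have key : translateEquiv R n c (∑ i, C (f i) * X i + C f0) = ∑ i, C (f i) * X i := by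
      simp [translateEquiv, MvPolynomial.algHom_C, mul_sub, Finset.sum_sub_distrib, hf]
    rw [Ideal.map_span, Set.image_singleton]
    exact congrArg (fun p => Ideal.span {p}) key.symm
  tfae_have 3 → 2 := by
    rintro ⟨e⟩
    -- The origin is a solution of the homogeneous equation, so evaluation there descends.
    refine ⟨(Ideal.Quotient.liftₐ _ (aeval fun _ => (0 : R)) fun p hp => ?_).comp e.toAlgHom⟩
    obtain ⟨q, rfl⟩ := Ideal.mem_span_singleton'.1 hp
    simp
  tfae_have 2 → 1 := by
    rintro ⟨φ⟩
    let ψ : MvPolynomial (Fin n) R →ₐ[R] R := φ.comp (Ideal.Quotient.mkₐ R _)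
    have h0 : ψ (∑ i, C (f i) * X i + C f0) = 0 := by
      have hmk : Ideal.Quotient.mkₐ R (Ideal.span {∑ i, C (f i) * X i + C f0})
          (∑ i, C (f i) * X i + C f0) = 0 :=
        Ideal.Quotient.eq_zero_iff_mem.2 (Ideal.mem_span_singleton_self _)
      rw [AlgHom.comp_apply, hmk, map_zero]
    have h1 : ∑ i, f i * ψ (X i) + f0 = 0 := by
      simpa only [map_add, map_sum, map_mul, MvPolynomial.algHom_C, Algebra.algebraMap_self,
        RingHom.id_apply] using h0
    rw [eq_neg_of_add_eq_zero_right h1]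
    exact neg_mem (sum_mem fun i _ =>
      Ideal.mul_mem_right _ _ (Ideal.subset_span (Set.mem_range_self i)))
  tfae_finish
end

section
/- Let R be a commutative ring and f_0, f_1, …, f_n ∈ R. The R-algebra homomorphism R[S_1,…,S_n,T_1,…,T_n]/(f_1S_1+⋯+f_nS_n+f_0, f_1T_1+⋯+f_nT_n+f_0) → R[S_1,…,S_n,T_1,…,T_n]/(f_1S_1+⋯+f_nS_n, f_1T_1+⋯+f_nT_n+f_0) determined by S_i ↦ S_i + T_i and T_i ↦ T_i is well defined and is an isomorphism of R-algebras. (Geometrically: the relation group scheme acts simply transitively on the spectrum of the forcing algebra.) -/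
/-!
The substitution `S_i ↦ S_i + T_i`, `T_i ↦ T_i` is an automorphism of `R[S,T]`, with inverse
`S_i ↦ S_i - T_i`, `T_i ↦ T_i`. It fixes `∑ f_i T_i + f_0` and sends `∑ f_i S_i + f_0` to
`∑ f_i S_i + (∑ f_i T_i + f_0)`. Since the ideals `(a + b, b)` and `(a, b)` agree, it carries the
ideal of the source onto the ideal of the target, and hence descends to an isomorphism of the
quotients.
-/

open MvPolynomial

/-- The ideal `(f_1 S_1 + ⋯ + f_n S_n + f_0, f_1 T_1 + ⋯ + f_n T_n + f_0)` in
`R[S_1,…,S_n,T_1,…,T_n]`, where `S_i = X (inl i)` and `T_i = X (inr i)`. -/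
noncomputable def forcingPairIdeal (R : Type) [CommRing R] (n : ℕ) (f : Fin n → R)
    (f0 : R) : Ideal (MvPolynomial (Fin n ⊕ Fin n) R) :=
  Ideal.span {(∑ i, C (f i) * X (Sum.inl i)) + C f0,
              (∑ i, C (f i) * X (Sum.inr i)) + C f0}

/-- The ideal `(f_1 S_1 + ⋯ + f_n S_n, f_1 T_1 + ⋯ + f_n T_n + f_0)` in
`R[S_1,…,S_n,T_1,…,T_n]`. -/
noncomputable def relationForcingIdeal (R : Type) [CommRing R] (n : ℕ) (f : Fin n → R)
    (f0 : R) : Ideal (MvPolynomial (Fin n ⊕ Fin n) R) :=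
  Ideal.span {∑ i, C (f i) * X (Sum.inl i),
              (∑ i, C (f i) * X (Sum.inr i)) + C f0}

/-- The `R`-algebra endomorphism of `R[S_1,…,S_n,T_1,…,T_n]` determined by
`S_i ↦ S_i + T_i` and `T_i ↦ T_i`. -/
noncomputable def addVars (R : Type) [CommRing R] (n : ℕ) :
    MvPolynomial (Fin n ⊕ Fin n) R →ₐ[R] MvPolynomial (Fin n ⊕ Fin n) R :=
  aeval (Sum.elim (fun i => X (Sum.inl i) + X (Sum.inr i)) (fun i => X (Sum.inr i)))

/-- The automorphism of `R[S_1,…,S_n,T_1,…,T_n]` underlying `addVars`; its inverse is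
`S_i ↦ S_i - T_i`, `T_i ↦ T_i`. -/
noncomputable def addVarsEquiv (R : Type) [CommRing R] (n : ℕ) :
    MvPolynomial (Fin n ⊕ Fin n) R ≃ₐ[R] MvPolynomial (Fin n ⊕ Fin n) R :=
  AlgEquiv.ofAlgHom (addVars R n)
    (aeval (Sum.elim (fun i => X (Sum.inl i) - X (Sum.inr i)) (fun i => X (Sum.inr i))))
    (by ext i : 1; rcases i with i | i <;> simp [addVars])
    (by ext i : 1; rcases i with i | i <;> simp [addVars])

lemma relationForcingIdeal_eq_map (R : Type) [CommRing R] (n : ℕ) (f : Fin n → R) (f0 : R) :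
    relationForcingIdeal R n f f0 =
      (forcingPairIdeal R n f f0).map (addVarsEquiv R n : _ →+* _) := by
  have hS : addVars R n ((∑ i, C (f i) * X (Sum.inl i)) + C f0) =
      (∑ i, C (f i) * X (Sum.inl i)) + ((∑ i, C (f i) * X (Sum.inr i)) + C f0) := by
    simp [addVars, mul_add, Finset.sum_add_distrib, add_assoc, algebraMap_eq]
  have hT : addVars R n ((∑ i, C (f i) * X (Sum.inr i)) + C f0) =
      (∑ i, C (f i) * X (Sum.inr i)) + C f0 := by
    simp [addVars, algebraMap_eq]
  rw [forcingPairIdeal, Ideal.map_span, Set.image_pair]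
  change _ = Ideal.span {addVars R n _, addVars R n _}
  rw [hS, hT, relationForcingIdeal]
  exact (Ideal.span_pair_add_right _ _).symm

/-- The assignment `S_i ↦ S_i + T_i`, `T_i ↦ T_i` induces a well-defined
`R`-algebra isomorphism
`R[S,T]/(∑ f_i S_i + f_0, ∑ f_i T_i + f_0) ≃ R[S,T]/(∑ f_i S_i, ∑ f_i T_i + f_0)`;
geometrically, the relation group scheme acts simply transitively on the spectrum of the
forcing algebra. -/
theorem statement4 (R : Type) [CommRing R] (n : ℕ) (f : Fin n → R) (f0 : R) :
    ∃ ψ : (MvPolynomial (Fin n ⊕ Fin n) R ⧸ forcingPairIdeal R n f f0) ≃ₐ[R]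
          (MvPolynomial (Fin n ⊕ Fin n) R ⧸ relationForcingIdeal R n f f0),
      ∀ g : MvPolynomial (Fin n ⊕ Fin n) R,
        ψ (Ideal.Quotient.mk (forcingPairIdeal R n f f0) g) =
          Ideal.Quotient.mk (relationForcingIdeal R n f f0) (addVars R n g) := by
  exact ⟨Ideal.quotientEquivAlg _ _ (addVarsEquiv R n) (relationForcingIdeal_eq_map R n f f0),
    fun _ => rfl⟩
end

section
/- Let (R,m) be a regular local ring containing a field of characteristic p > 0, and let S ⊆ R be a Noetherian subring such that the inclusion S → R splits as a homomorphism of S-modules (S is a direct summand of R). Then every ideal of S is tightly closed: I^* = I for every ideal I ⊆ S. -/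
open IsLocalRing RingTheory.Sequence

/-! ### Regular local rings are domains -/

theorem natCast_le_of_succ_le_add_one {k : ℕ} {a : WithBot ℕ∞}
    (h : ((k + 1 : ℕ) : WithBot ℕ∞) ≤ a + 1) : (k : WithBot ℕ∞) ≤ a := by
  rw [Nat.cast_add, Nat.cast_one] at h
  rcases a with _ | a
  · exact absurd h (by
      change ¬ ((k:WithBot ℕ∞) + 1 ≤ (⊥ : WithBot ℕ∞) + 1)
      rw [WithBot.bot_add, le_bot_iff]
      exact WithBot.coe_ne_bot (a := ((k:ℕ∞) + 1)))
  · have h' : (((k : ℕ∞) + 1 : ℕ∞) : WithBot ℕ∞) ≤ ((a + 1 : ℕ∞) : WithBot ℕ∞) := h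
    rw [WithBot.coe_le_coe] at h'
    have : (k : ℕ∞) ≤ a := (ENat.add_le_add_iff_right (by simp)).mp h'
    exact WithBot.coe_le_coe.mpr this

theorem ringKrullDim_le_length {A : Type} [CommRing A] [IsLocalRing A] [IsNoetherianRing A]
    {rs : List A} (h : Ideal.ofList rs = maximalIdeal A) :
    ringKrullDim A ≤ rs.length := by
  refine (ringKrullDim_le_spanFinrank_maximalIdeal A).trans ?_
  classical
  have h1 : (maximalIdeal A).spanFinrank ≤ rs.length := by
    rw [← h]
    have hs : {r | r ∈ rs} = (rs.toFinset : Set A) := by ext; simp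
    have := Submodule.spanFinrank_span_le_ncard_of_finite (R := A) (s := {r | r ∈ rs})
      (by rw [hs]; exact Finset.finite_toSet _)
    refine this.trans ?_
    rw [hs, Set.ncard_coe_finset]
    exact List.toFinset_card_le rs
  exact_mod_cast h1

theorem ringKrullDim_le_quotient_succ {A : Type} [CommRing A] [IsLocalRing A] [IsNoetherianRing A]
    {x : A} (hx : x ∈ maximalIdeal A) :
    ringKrullDim A ≤ ringKrullDim (A ⧸ Ideal.span {x}) + 1 := by
  rw [← maximalIdeal_height_eq_ringKrullDim]
  exact Ideal.height_le_ringKrullDim_quotient_add_one hx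

theorem map_mk_maximalIdeal {A : Type} [CommRing A] [IsLocalRing A] (I : Ideal A)
    [IsLocalRing (A ⧸ I)] :
    (maximalIdeal A).map (Ideal.Quotient.mk I) = maximalIdeal (A ⧸ I) := by
  have hs : Function.Surjective (Ideal.Quotient.mk I) := Ideal.Quotient.mk_surjective
  have : IsLocalHom (Ideal.Quotient.mk I) := hs.isLocalHom
  have hc : (maximalIdeal (A ⧸ I)).comap (Ideal.Quotient.mk I) = maximalIdeal A :=
    ((local_hom_TFAE (Ideal.Quotient.mk I)).out 0 4).mp this
  rw [← hc, Ideal.map_comap_of_surjective _ hs]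

theorem isLocalRing_quotient {A : Type} [CommRing A] [IsLocalRing A] {I : Ideal A}
    (hI : I ≠ ⊤) : IsLocalRing (A ⧸ I) :=
  have := Ideal.Quotient.nontrivial_iff.mpr hI
  IsLocalRing.of_surjective' (Ideal.Quotient.mk I) Ideal.Quotient.mk_surjective

/-- Modulo an ideal containing `x`, the remaining generators still generate the maximal ideal. -/
theorem ofList_map_mk_tail {A : Type} [CommRing A] [IsLocalRing A] {I : Ideal A}
    [IsLocalRing (A ⧸ I)] {x : A} {rs : List A} (hx : x ∈ I)
    (h : Ideal.ofList (x :: rs) = maximalIdeal A) :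
    Ideal.ofList (rs.map (Ideal.Quotient.mk I)) = maximalIdeal (A ⧸ I) := by
  rw [← map_mk_maximalIdeal, ← h, Ideal.map_ofList, List.map_cons, Ideal.ofList_cons,
    Ideal.Quotient.eq_zero_iff_mem.mpr hx]
  simp

/-- The bottom of a chain of primes of length `d` gives a prime whose quotient has
dimension at least `d`. -/
theorem exists_prime_dim_quotient {A : Type} [CommRing A] [Nontrivial A] {d : ℕ}
    (h : (d : WithBot ℕ∞) ≤ ringKrullDim A) :
    ∃ P : Ideal A, P.IsPrime ∧ (d : WithBot ℕ∞) ≤ ringKrullDim (A ⧸ P) := by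
  obtain ⟨l, hl⟩ := Order.le_krullDim_iff.mp h
  refine ⟨l.head.asIdeal, l.head.isPrime, ?_⟩
  rw [ringKrullDim_quotient, Order.le_krullDim_iff]
  refine ⟨⟨l.length, fun i => ⟨l i, ?_⟩, fun i => l.step i⟩, hl⟩
  exact LTSeries.head_le l i

/-- If the maximal ideal of a Noetherian local ring of dimension at least `d` is generated by `d`
elements, the ring is a domain and these generators form a regular sequence.

Induction on `d`: for the first generator `x`, the quotient by `(x)` is a domain of dimension `d - 1`.
A prime `P` with `dim A ⧸ P ≥ d` does not contain `x`, and comparing dimensions of `A ⧸ (P + (x))`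
and `A ⧸ (x)` shows `P ⊆ (x)`. Hence `P = xP`, so `P = 0` by Nakayama. -/
theorem regular_aux (d : ℕ) : ∀ (A : Type) [CommRing A] [IsLocalRing A] [IsNoetherianRing A]
    (rs : List A), rs.length = d → Ideal.ofList rs = maximalIdeal A →
    (d : WithBot ℕ∞) ≤ ringKrullDim A → IsDomain A ∧ IsWeaklyRegular A rs := by
  induction d with
  | zero =>
    intro A _ _ _ rs hlen hm _
    obtain rfl := List.length_eq_zero_iff.mp hlen
    rw [Ideal.ofList_nil] at hm
    exact ⟨(isField_iff_maximalIdeal_eq.mpr hm.symm).isDomain, .nil A A⟩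
  | succ d ih =>
    intro A _ _ _ rs hlen hm hdim
    obtain ⟨x, rs, rfl⟩ := List.exists_cons_of_length_eq_add_one hlen
    have hlen' : rs.length = d := by simpa using hlen
    have hx : x ∈ maximalIdeal A := by
      rw [← hm]; exact Ideal.subset_span (by simp)
    have hxle : Ideal.span {x} ≤ maximalIdeal A := (Ideal.span_singleton_le_iff_mem _).mpr hx
    have := isLocalRing_quotient (ne_top_of_le_ne_top Ideal.IsPrime.ne_top' hxle)
    have hm' : Ideal.ofList (rs.map (Ideal.Quotient.mk (Ideal.span {x}))) =
        maximalIdeal (A ⧸ Ideal.span {x}) :=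
      ofList_map_mk_tail (Ideal.mem_span_singleton_self x) hm
    obtain ⟨hdom, hreg⟩ := ih (A ⧸ Ideal.span {x}) _ (by simpa using hlen') hm'
      (natCast_le_of_succ_le_add_one (hdim.trans (ringKrullDim_le_quotient_succ hx)))
    obtain ⟨P, hP, hPdim⟩ := exists_prime_dim_quotient hdim
    have := isLocalRing_quotient hP.ne_top
    -- if `x ∈ P`, then `A ⧸ P` would have dimension at most `d`
    have hxP : x ∉ P := by
      intro hxP
      have := hPdim.trans (ringKrullDim_le_length (ofList_map_mk_tail hxP hm))
      rw [List.length_map, hlen'] at this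
      have : d + 1 ≤ d := by exact_mod_cast this
      omega
    -- if `P ⊄ (x)`, then `A ⧸ (P + (x))`, of dimension at least `d`, is a proper quotient of the
    -- domain `A ⧸ (x)`, whose dimension is at most `d`
    have hPx : P ≤ Ideal.span {x} := by
      intro y hy
      by_contra hyx
      have hy0 : Ideal.Quotient.mk (Ideal.span {x}) y ∈ nonZeroDivisors (A ⧸ Ideal.span {x}) :=
        mem_nonZeroDivisors_of_ne_zero (by rwa [Ne, Ideal.Quotient.eq_zero_iff_mem])
      have h1 := ringKrullDim_quotient_succ_le_of_nonZeroDivisor hy0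
      have h2 := h1.trans (ringKrullDim_le_length hm')
      rw [List.length_map, hlen'] at h2
      have hxm : Ideal.Quotient.mk P x ∈ maximalIdeal (A ⧸ P) := by
        rw [← map_mk_maximalIdeal]; exact Ideal.mem_map_of_mem _ hx
      have h3 := natCast_le_of_succ_le_add_one (hPdim.trans (ringKrullDim_le_quotient_succ hxm))
      let f : A ⧸ Ideal.span {x} →+* (A ⧸ P) ⧸ Ideal.span {Ideal.Quotient.mk P x} :=
        Ideal.Quotient.lift _ ((Ideal.Quotient.mk _).comp (Ideal.Quotient.mk P)) (by
          intro a ha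
          rw [RingHom.comp_apply, Ideal.Quotient.eq_zero_iff_mem]
          obtain ⟨b, rfl⟩ := Ideal.mem_span_singleton.mp ha
          rw [map_mul]
          exact Ideal.mul_mem_right _ _ (Ideal.mem_span_singleton_self _))
      have hfs : Function.Surjective f := Ideal.Quotient.lift_surjective_of_surjective _ _
        (Ideal.Quotient.mk_surjective.comp Ideal.Quotient.mk_surjective)
      let g : (A ⧸ Ideal.span {x}) ⧸ Ideal.span {Ideal.Quotient.mk (Ideal.span {x}) y} →+*
          (A ⧸ P) ⧸ Ideal.span {Ideal.Quotient.mk P x} :=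
        Ideal.Quotient.lift _ f (by
          intro a ha
          obtain ⟨b, rfl⟩ := Ideal.mem_span_singleton.mp ha
          have : f (Ideal.Quotient.mk (Ideal.span {x}) y) = 0 := by
            change Ideal.Quotient.mk _ (Ideal.Quotient.mk P y) = 0
            rw [Ideal.Quotient.eq_zero_iff_mem.mpr hy, map_zero]
          rw [map_mul, this, zero_mul])
      have h4 := h3.trans (ringKrullDim_le_of_surjective g
        (Ideal.Quotient.lift_surjective_of_surjective _ _ hfs))
      have h5 : (d : WithBot ℕ∞) + 1 ≤ d := le_trans (by gcongr) h2
      have : d + 1 ≤ d := by exact_mod_cast h5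
      omega
    have hP0 : P = ⊥ := by
      refine Submodule.eq_bot_of_le_smul_of_le_jacobson_bot (Ideal.span {x}) P
        (IsNoetherian.noetherian P) ?_ (hxle.trans (maximalIdeal_le_jacobson _))
      intro y hy
      obtain ⟨b, rfl⟩ := Ideal.mem_span_singleton.mp (hPx hy)
      exact Submodule.smul_mem_smul (Ideal.mem_span_singleton_self x)
        ((hP.mem_or_mem hy).resolve_left hxP)
    subst hP0
    have hA : IsDomain A := IsDomain.of_bot_isPrime A
    refine ⟨hA, .cons ?_ ?_⟩
    · exact (IsRegular.of_ne_zero (by simpa using hxP)).left.isSMulRegular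
    · have h6 := (isWeaklyRegular_map_algebraMap_iff (S := A ⧸ Ideal.span {x})
        (M := A ⧸ Ideal.span {x}) rs).mp hreg
      refine (LinearEquiv.isWeaklyRegular_congr (Submodule.quotEquivOfEq _ _ ?_) rs).mp h6
      rw [← Submodule.ideal_span_singleton_smul]
      simp

/-! ### Colengths of ideals -/

/-- The length of the cyclic module `A ⧸ I`. -/
noncomputable def colength {A : Type} [CommRing A] (I : Ideal A) : ℕ∞ := Module.length A (A ⧸ I)

/-- Additivity of length along `0 → A ⧸ (J : f) → A ⧸ J → A ⧸ (J + (f)) → 0`, where the first map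
is multiplication by `f`. -/
theorem colength_eq_colon_add_sup {A : Type} [CommRing A] (J : Ideal A) (f : A) :
    colength J =
      colength (J.colon {f} : Ideal A) + colength (J ⊔ Ideal.span {f}) := by
  have hc : (J.colon {f} : Ideal A) = Submodule.comap (LinearMap.mulLeft A f) J := by
    ext a
    rw [Submodule.mem_colon_singleton, Submodule.mem_comap, LinearMap.mulLeft_apply, smul_eq_mul,
      mul_comm]
  rw [hc]
  unfold colength
  refine Module.length_eq_add_of_exact
    (Submodule.mapQ (Submodule.comap (LinearMap.mulLeft A f) J) J (LinearMap.mulLeft A f) le_rfl)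
    (Submodule.factor (le_sup_left : J ≤ J ⊔ Ideal.span {f})) ?_ ?_ ?_
  · rw [← LinearMap.ker_eq_bot, Submodule.ker_mapQ]
    simp
  · exact Submodule.factor_surjective _
  · intro y
    obtain ⟨y, rfl⟩ := Submodule.mkQ_surjective _ y
    constructor
    · intro h
      have hy : y ∈ J ⊔ Ideal.span {f} := by
        rwa [← Submodule.Quotient.mk_eq_zero]
      obtain ⟨j, hj, z, hz, rfl⟩ := Submodule.mem_sup.mp hy
      obtain ⟨b, rfl⟩ := Ideal.mem_span_singleton.mp hz
      refine ⟨Submodule.Quotient.mk b, ?_⟩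
      rw [Submodule.mapQ_apply, Submodule.mkQ_apply, Submodule.Quotient.eq]
      simpa using hj
    · rintro ⟨b, hb⟩
      obtain ⟨b, rfl⟩ := Submodule.mkQ_surjective _ b
      rw [← hb]
      change Submodule.Quotient.mk (f * b) = 0
      rw [Submodule.Quotient.mk_eq_zero]
      exact Ideal.mem_sup_right (Ideal.mul_mem_right _ _ (Ideal.mem_span_singleton_self f))

theorem colength_anti {A : Type} [CommRing A] {I J : Ideal A} (h : I ≤ J) :
    colength J ≤ colength I :=
  Module.length_le_of_surjective (Submodule.factor h) (Submodule.factor_surjective h)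

theorem eq_of_colength_le {A : Type} [CommRing A] {I J : Ideal A} (h : I ≤ J)
    (hfin : colength I ≠ ⊤)
    (hlen : colength I ≤ colength J) : I = J := by
  refine le_antisymm h fun c hc => ?_
  by_contra hcI
  have h1 := colength_eq_colon_add_sup I c
  have h2 : colength J ≤ colength (I ⊔ Ideal.span {c}) :=
    colength_anti (sup_le h ((Ideal.span_singleton_le_iff_mem _).mpr hc))
  have : Nontrivial (A ⧸ (I.colon {c} : Ideal A)) := by
    refine Ideal.Quotient.nontrivial_iff.mpr fun ht => hcI ?_
    have := (Ideal.eq_top_iff_one _).mp ht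
    simpa [Submodule.mem_colon_singleton] using this
  have h3 : 0 < colength (I.colon {c} : Ideal A) := Module.length_pos
  have h4 : 1 ≤ colength (I.colon {c} : Ideal A) := Order.one_le_iff_pos.mpr h3
  have h5 : 1 + colength I ≤ colength I := by
    conv_rhs => rw [h1]
    exact add_le_add h4 (hlen.trans h2)
  rw [add_comm] at h5
  exact absurd h5 (not_le.mpr ((ENat.lt_add_one_iff hfin).mpr le_rfl))

theorem colength_top {A : Type} [CommRing A] : colength (⊤ : Ideal A) = 0 := by
  have : Subsingleton (A ⧸ (⊤ : Ideal A)) := Ideal.Quotient.subsingleton_iff.mpr rfl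
  exact Module.length_eq_zero

/-- If `x` is a nonzerodivisor modulo `I`, then `A ⧸ (I + (xⁿ))` has a filtration with `n` factors
`A ⧸ (I + (x))`. -/
theorem colength_sup_span_pow {A : Type} [CommRing A] (I : Ideal A) {x : A}
    (hx : ∀ a, x * a ∈ I → a ∈ I) (n : ℕ) :
    colength (I ⊔ Ideal.span {x ^ n}) =
      n * colength (I ⊔ Ideal.span {x}) := by
  have hxn : ∀ n a, x ^ n * a ∈ I → a ∈ I := by
    intro n
    induction n with
    | zero => intro a ha; simpa using ha
    | succ n ih => intro a ha; exact ih a (hx _ (by rwa [← mul_assoc, ← pow_succ']))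
  induction n with
  | zero =>
    simp only [pow_zero, Ideal.span_singleton_one, le_top, sup_of_le_right, Nat.cast_zero, zero_mul]
    exact colength_top
  | succ n ih =>
    have h1 : (I ⊔ Ideal.span {x ^ (n + 1)}) ⊔ Ideal.span {x ^ n} = I ⊔ Ideal.span {x ^ n} := by
      have : Ideal.span {x ^ (n + 1)} ≤ Ideal.span {x ^ n} :=
        Ideal.span_singleton_le_span_singleton.mpr (pow_dvd_pow x n.le_succ)
      rw [sup_assoc, sup_eq_right.mpr this]
    have h2 : ((I ⊔ Ideal.span {x ^ (n + 1)}).colon {x ^ n} : Ideal A) = I ⊔ Ideal.span {x} := by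
      ext a
      rw [Submodule.mem_colon_singleton, smul_eq_mul]
      constructor
      · intro h
        obtain ⟨i, hi, z, hz, hiz⟩ := Submodule.mem_sup.mp h
        obtain ⟨b, rfl⟩ := Ideal.mem_span_singleton.mp hz
        have : a - x * b ∈ I := hxn n _ (by
          have : x ^ n * (a - x * b) = i := by linear_combination -hiz
          rwa [this])
        have := Submodule.add_mem_sup this
          (Ideal.mul_mem_right b _ (Ideal.mem_span_singleton_self x))
        simpa using this
      · intro h
        obtain ⟨i, hi, z, hz, rfl⟩ := Submodule.mem_sup.mp h
        obtain ⟨b, rfl⟩ := Ideal.mem_span_singleton.mp hz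
        rw [add_mul]
        refine Submodule.add_mem_sup (Ideal.mul_mem_right _ _ hi)
          (Ideal.mem_span_singleton.mpr ⟨b, by ring⟩)
    rw [colength_eq_colon_add_sup _ (x ^ n), h1, h2, ih]
    push_cast
    ring

theorem isWeaklyRegular_concat_pow {A : Type} [CommRing A] {ys : List A} {x : A}
    (h : IsWeaklyRegular A (ys ++ [x])) (n : ℕ) :
    IsWeaklyRegular A (ys ++ [x ^ n]) ∧
      colength (Ideal.ofList (ys ++ [x ^ n])) =
        n * colength (Ideal.ofList (ys ++ [x])) := by
  obtain ⟨h1, h2⟩ := (isWeaklyRegular_append_iff A ys [x]).mp h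
  rw [isWeaklyRegular_singleton_iff] at h2
  refine ⟨(isWeaklyRegular_append_iff A ys _).mpr
    ⟨h1, (isWeaklyRegular_singleton_iff _ _).mpr (h2.pow n)⟩, ?_⟩
  simp only [Ideal.ofList_append, Ideal.ofList_singleton]
  refine colength_sup_span_pow _ (fun a ha => ?_) n
  have h3 : x • (Submodule.Quotient.mk a : A ⧸ (Ideal.ofList ys • ⊤ : Submodule A A)) = x • 0 := by
    rw [smul_zero, ← Submodule.Quotient.mk_smul, Submodule.Quotient.mk_eq_zero]
    simpa using ha
  simpa using (Submodule.Quotient.mk_eq_zero _).mp (h2 h3)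

theorem ofList_perm {A : Type} [CommRing A] {l l' : List A} (h : l.Perm l') :
    Ideal.ofList l = Ideal.ofList l' := by
  unfold Ideal.ofList
  congr 1
  ext a
  exact h.mem_iff

/-- Replacing the elements `rs` of a regular sequence by their `n`-th powers multiplies the colength
by `n ^ rs.length`. The list `ys` collects elements already replaced; each element of `rs` in turn
is moved to the last place, which is allowed since regular sequences in a Noetherian local ring
can be permuted. -/
theorem colength_ofList_map_pow {A : Type} [CommRing A] [IsLocalRing A] [IsNoetherianRing A]
    {n : ℕ} (hn : n ≠ 0) (rs : List A) : ∀ ys : List A, IsWeaklyRegular A (ys ++ rs) →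
      (∀ r ∈ ys ++ rs, r ∈ maximalIdeal A) →
      colength (Ideal.ofList (ys ++ rs.map (· ^ n))) =
        n ^ rs.length * colength (Ideal.ofList (ys ++ rs)) := by
  induction rs with
  | nil => intro ys _ _; simp
  | cons x rs ih =>
    intro ys hreg hmem
    have p1 : (ys ++ x :: rs).Perm ((ys ++ rs) ++ [x]) := by
      rw [List.append_assoc]
      exact List.Perm.append_left _ (List.perm_append_singleton x rs).symm
    have p2 : ((ys ++ rs) ++ [x ^ n]).Perm ((ys ++ [x ^ n]) ++ rs) := by
      rw [List.append_assoc, List.append_assoc]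
      exact List.Perm.append_left _ (List.perm_append_singleton (x ^ n) rs)
    obtain ⟨h1, h2⟩ := isWeaklyRegular_concat_pow
      (isWeaklyRegular_of_perm_of_subset_maximalIdeal hreg p1 hmem) n
    have hmem' : ∀ r ∈ (ys ++ rs) ++ [x ^ n], r ∈ maximalIdeal A := by
      intro r hr
      simp only [List.mem_append, List.mem_singleton] at hr
      rcases hr with (hr | hr) | rfl
      · exact hmem r (by simp [hr])
      · exact hmem r (by simp [hr])
      · exact Ideal.pow_mem_of_mem _ (hmem x (by simp)) n (Nat.pos_of_ne_zero hn)
    have h3 := ih (ys ++ [x ^ n]) (isWeaklyRegular_of_perm_of_subset_maximalIdeal h1 p2 hmem')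
      (fun r hr => hmem' r (p2.mem_iff.mpr hr))
    rw [List.map_cons, List.append_cons, h3, ← ofList_perm p2, h2, ofList_perm p1,
      List.length_cons, pow_succ, mul_assoc]

/-! ### Frobenius powers and socle elements -/

/-- An element outside an ideal `K` containing a power of `M` has a multiple that is a nonzero
element of the socle `(K : M) ⧸ K`. -/
theorem exists_socle {A : Type} [CommRing A] {M K : Ideal A} {n : ℕ} (h : M ^ n ≤ K) {g : A}
    (hg : g ∉ K) : ∃ r, r * g ∉ K ∧ ∀ a ∈ M, a * (r * g) ∈ K := by
  have h' : ∀ b ∈ M ^ n, b * g ∈ K := fun b hb => Ideal.mul_mem_right _ _ (h hb)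
  clear h
  induction n with
  | zero => exact absurd (by simpa using h' 1 (by simp)) hg
  | succ n ih =>
    by_cases hn : ∀ b ∈ M ^ n, b * g ∈ K
    · exact ih hn
    · push Not at hn
      obtain ⟨b, hb, hbg⟩ := hn
      refine ⟨b, hbg, fun a ha => ?_⟩
      rw [← mul_assoc]
      exact h' _ (by rw [pow_succ']; exact Ideal.mul_mem_mul ha hb)

theorem colength_maximalIdeal {A : Type} [CommRing A] [IsLocalRing A] :
    colength (maximalIdeal A) = 1 := by
  have : IsSimpleModule A (A ⧸ maximalIdeal A) :=
    isSimpleModule_iff_isCoatom.mpr (maximalIdeal.isMaximal A).out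
  exact Module.length_eq_one _ _

theorem colon_eq_maximalIdeal {A : Type} [CommRing A] [IsLocalRing A] {K : Ideal A} {f : A}
    (hf : f ∉ K) (hmf : ∀ a ∈ maximalIdeal A, a * f ∈ K) :
    (K.colon {f} : Ideal A) = maximalIdeal A := by
  refine le_antisymm (le_maximalIdeal fun ht => hf ?_) fun a ha =>
    Submodule.mem_colon_singleton.mpr (hmf a ha)
  simpa [Submodule.mem_colon_singleton] using (Ideal.eq_top_iff_one _).mp ht

theorem map_maximalIdeal_le_colon {A : Type} [CommRing A] [IsLocalRing A] (φ : A →+* A)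
    {K : Ideal A} {f : A} (hmf : ∀ a ∈ maximalIdeal A, a * f ∈ K) :
    (maximalIdeal A).map φ ≤ (K.map φ).colon {φ f} := by
  refine Ideal.map_le_iff_le_comap.mpr fun a ha => ?_
  rw [Ideal.mem_comap, Submodule.mem_colon_singleton, smul_eq_mul, ← map_mul]
  exact Ideal.mem_map_of_mem φ (hmf a ha)

/-- Subtraction-free form of `ℓ(J^φ ⧸ K^φ) ≤ ℓ(A ⧸ m^φ) · ℓ(J ⧸ K)`, where `I^φ` is the extension of `I`
along `φ`. Climbing from `K` to `J` by socle elements, each step adds one to the length on the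
right and, on the left, the length of a quotient of `A ⧸ m^φ`. -/
theorem colength_map_add_le {A : Type} [CommRing A] [IsLocalRing A] [IsNoetherianRing A]
    (φ : A →+* A) {J : Ideal A} (K : Ideal A) (hKJ : K ≤ J) {N : ℕ}
    (hK : maximalIdeal A ^ N ≤ K) :
    colength (K.map φ) + colength ((maximalIdeal A).map φ) * colength J ≤
      colength (J.map φ) + colength ((maximalIdeal A).map φ) * colength K := by
  induction K using WellFoundedGT.induction with
  | ind K ih =>
    by_cases hJK : J ≤ K
    · rw [le_antisymm hKJ hJK]
    · obtain ⟨g, hgJ, hgK⟩ := SetLike.not_le_iff_exists.mp hJK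
      obtain ⟨r, hf, hmf⟩ := exists_socle hK hgK
      set f := r * g
      have hfJ : f ∈ J := Ideal.mul_mem_left _ _ hgJ
      have h1 := ih (K ⊔ Ideal.span {f})
        (left_lt_sup.mpr fun h => hf ((Ideal.span_singleton_le_iff_mem _).mp h))
        (sup_le hKJ ((Ideal.span_singleton_le_iff_mem _).mpr hfJ)) (hK.trans le_sup_left)
      have h2 := colength_eq_colon_add_sup K f
      rw [colon_eq_maximalIdeal hf hmf, colength_maximalIdeal] at h2
      have h3 := colength_eq_colon_add_sup (K.map φ) (φ f)
      have h4 : colength ((K.map φ).colon {φ f} : Ideal A) ≤ colength ((maximalIdeal A).map φ) :=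
        colength_anti (map_maximalIdeal_le_colon φ hmf)
      rw [Ideal.map_sup, Ideal.map_span, Set.image_singleton] at h1
      rw [h3, h2, mul_add, mul_one, add_assoc, add_left_comm (colength (J.map φ))]
      exact add_le_add h4 h1

/-- For a regular local ring and `φ` a power of Frobenius, `J^[q] : f^q = m^[q] = (J : f)^[q]` for a
socle element `f` of an `m`-primary ideal `J`. This is the case of flatness of Frobenius that
tight closure needs.

The bound of `colength_map_add_le` is an equality for `K = (x₁ⁿ⁺¹, …, x_dⁿ⁺¹)` and the unit ideal,
so it is an equality at each step of a chain from `K` through `J` and `J + (f)`. -/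
theorem colon_map_eq {A : Type} [CommRing A] [IsLocalRing A] [IsNoetherianRing A]
    {rs : List A} (hreg : IsWeaklyRegular A rs) (hm : Ideal.ofList rs = maximalIdeal A)
    {q : ℕ} (hq : q ≠ 0) (φ : A →+* A) (hφ : ∀ a, φ a = a ^ q)
    {J : Ideal A} {n : ℕ} (hJ : maximalIdeal A ^ n ≤ J) {f : A} (hf : f ∉ J)
    (hmf : ∀ a ∈ maximalIdeal A, a * f ∈ J) :
    ((J.map φ).colon {φ f} : Ideal A) = (maximalIdeal A).map φ := by
  have hmem : ∀ r ∈ rs, r ∈ maximalIdeal A := fun r hr => by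
    rw [← hm]; exact Ideal.subset_span hr
  have hcol : ∀ k : ℕ, k ≠ 0 →
      colength (Ideal.ofList (rs.map (· ^ k))) = ((k ^ rs.length : ℕ) : ℕ∞) := by
    intro k hk
    have := colength_ofList_map_pow hk rs [] (by simpa using hreg) (by simpa using hmem)
    simpa [hm, colength_maximalIdeal] using this
  have hφf : (φ : A → A) = (· ^ q) := funext hφ
  -- `Q = q ^ d` is the length of `A ⧸ m^[q]`
  set Q : ℕ := q ^ rs.length
  have hQ : colength ((maximalIdeal A).map φ) = (Q : ℕ∞) := by
    rw [← hm, Ideal.map_ofList, hφf, hcol q hq]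
  set K : Ideal A := Ideal.ofList (rs.map (· ^ (n + 1))) with hKdef
  have hKlen : colength K = (((n + 1) ^ rs.length : ℕ) : ℕ∞) := hcol _ n.succ_ne_zero
  have hKφ : colength (K.map φ) = ((Q * (n + 1) ^ rs.length : ℕ) : ℕ∞) := by
    have : rs.map ((φ : A → A) ∘ (· ^ (n + 1))) = rs.map (· ^ ((n + 1) * q)) := by
      refine List.map_congr_left fun a _ => ?_
      simp [hφ, pow_mul]
    rw [hKdef, Ideal.map_ofList, List.map_map, this, hcol _ (by positivity), mul_pow, mul_comm]
  have hKJ : K ≤ J := by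
    refine le_trans (Ideal.span_le.mpr ?_) ((Ideal.pow_le_pow_right n.le_succ).trans hJ)
    intro a ha
    obtain ⟨r, hr, rfl⟩ := List.mem_map.mp ha
    exact Ideal.pow_mem_pow (hmem r hr) _
  obtain ⟨N, hN⟩ : ∃ N, maximalIdeal A ^ N ≤ K := by
    refine Ideal.exists_pow_le_of_le_radical_of_fg ?_ (IsNoetherian.noetherian _)
    rw [← hm]
    refine Ideal.span_le.mpr fun r hr => ⟨n + 1, Ideal.subset_span (List.mem_map.mpr ⟨r, hr, rfl⟩)⟩
  have h1 := colength_map_add_le φ K hKJ hN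
  have h2 := colength_map_add_le φ (J ⊔ Ideal.span {f}) le_top (hJ.trans le_sup_left)
  have h3 := colength_eq_colon_add_sup J f
  rw [colon_eq_maximalIdeal hf hmf, colength_maximalIdeal] at h3
  have h4 := colength_eq_colon_add_sup (J.map φ) (φ f)
  have h5 : colength ((J ⊔ Ideal.span {f}).map φ) =
      colength (J.map φ ⊔ Ideal.span {φ f}) := by
    rw [Ideal.map_sup, Ideal.map_span, Set.image_singleton]
  have hfin : colength (J.map φ ⊔ Ideal.span {φ f}) ≠ ⊤ := by
    refine ne_top_of_le_ne_top (b := colength (K.map φ)) (by rw [hKφ]; exact ENat.natCast_ne_top _)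
      (colength_anti ((Ideal.map_mono hKJ).trans le_sup_left))
  rw [hQ, hKφ, hKlen, ← Nat.cast_mul, add_comm] at h1
  have h1' := (ENat.add_le_add_iff_right (ENat.natCast_ne_top _)).mp h1
  rw [hQ, Ideal.map_top, colength_top, mul_zero, zero_add, add_zero, h5] at h2
  rw [h3, h4, mul_add, mul_one] at h1'
  have h6 := (add_le_add_right h2 (Q : ℕ∞)).trans h1'
  have h7 := (ENat.add_le_add_iff_right hfin).mp h6
  exact (eq_of_colength_le (map_maximalIdeal_le_colon φ hmf)
    (by rw [hQ]; exact ENat.natCast_ne_top _) (hQ.trans_le h7)).symm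

/-! ### Tight closure -/

theorem exists_notMem_sup_pow {A : Type} [CommRing A] [IsLocalRing A] [IsNoetherianRing A]
    {J : Ideal A} {f : A} (hf : f ∉ J) : ∃ n, f ∉ J ⊔ maximalIdeal A ^ n := by
  by_contra! h
  have h1 := Ideal.iInf_pow_smul_eq_bot_of_isLocalRing (M := A ⧸ J) (maximalIdeal A)
    Ideal.IsPrime.ne_top'
  have h2 : (Submodule.Quotient.mk f : A ⧸ J) ∈
      (⨅ i : ℕ, maximalIdeal A ^ i • ⊤ : Submodule A (A ⧸ J)) := by
    refine (Submodule.mem_iInf _).mpr fun n => ?_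
    obtain ⟨j, hj, b, hb, hjb⟩ := Submodule.mem_sup.mp (h n)
    have h3 : (Submodule.Quotient.mk f : A ⧸ J) = b • Submodule.Quotient.mk 1 := by
      rw [← Submodule.Quotient.mk_smul, Submodule.Quotient.eq, smul_eq_mul, mul_one, ← hjb]
      simpa using hj
    rw [h3]
    exact Submodule.smul_mem_smul hb trivial
  rw [h1, Submodule.mem_bot, Submodule.Quotient.mk_eq_zero] at h2
  exact hf h2

/-- Every ideal `J` of a regular local ring is tightly closed, with Frobenius powers expressed as
extensions along iterated Frobenius. For a socle element `rf` of an `m`-primary ideal above `J` not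
containing `f`, the multiplier `c` lies in `m^[q] ⊆ m^e` for all large `e`, so it vanishes. -/
theorem mem_of_frobenius_mem {A : Type} [CommRing A] [IsLocalRing A] [IsNoetherianRing A]
    (p : ℕ) [Fact p.Prime] [CharP A p] {rs : List A} (hreg : IsWeaklyRegular A rs)
    (hm : Ideal.ofList rs = maximalIdeal A) {J : Ideal A} {c f : A} (hc : c ≠ 0) {e₀ : ℕ}
    (h : ∀ e ≥ e₀, c * f ^ p ^ e ∈ J.map (iterateFrobenius A p e)) : f ∈ J := by
  by_contra hf
  obtain ⟨n, hn⟩ := exists_notMem_sup_pow hf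
  obtain ⟨r, hr, hmr⟩ := exists_socle (le_sup_right : maximalIdeal A ^ n ≤ J ⊔ _) hn
  have hp : p.Prime := Fact.out
  have hmem : ∀ e ≥ e₀, c ∈ maximalIdeal A ^ e := by
    intro e he
    have h1 := colon_map_eq hreg hm (pow_ne_zero e hp.ne_zero) (iterateFrobenius A p e)
      (fun a => iterateFrobenius_def p e a) le_sup_right hr hmr
    have h2 : c ∈ (maximalIdeal A).map (iterateFrobenius A p e) := by
      rw [← h1, Submodule.mem_colon_singleton, smul_eq_mul, iterateFrobenius_def, mul_pow,
        mul_left_comm]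
      exact Ideal.mul_mem_left _ _ (Ideal.map_mono le_sup_left (h e he))
    refine Ideal.map_le_iff_le_comap.mpr (fun a ha => ?_) h2
    rw [Ideal.mem_comap, iterateFrobenius_def]
    exact Ideal.pow_le_pow_right (Nat.lt_pow_self hp.one_lt).le (Ideal.pow_mem_pow ha _)
  refine hc ?_
  rw [← Ideal.mem_bot, ← Ideal.iInf_pow_eq_bot_of_isLocalRing (maximalIdeal A)
    Ideal.IsPrime.ne_top']
  refine (Submodule.mem_iInf _).mpr fun i => ?_
  exact Ideal.pow_le_pow_right (le_max_left i e₀) (hmem _ (le_max_right i e₀))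

/-- Let `(R, m)` be a regular local ring of characteristic `p > 0`
(`m` is generated by `d` elements where `d` is the Krull dimension of `R`), and let
`S ⊆ R` be a Noetherian subring such that the inclusion `S → R` splits as a map of
`S`-modules. Then every ideal of `S` is tightly closed. -/
theorem statement5 (R : Type) [CommRing R] [IsLocalRing R] [IsNoetherianRing R]
    (p : ℕ) [Fact p.Prime] [CharP R p]
    (hreg : ∃ s : Finset R, Ideal.span (s : Set R) = IsLocalRing.maximalIdeal R ∧
      (s.card : WithBot ℕ∞) = ringKrullDim R)
    (S : Type) [CommRing S] [IsNoetherianRing S] [Algebra S R]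
    (hinj : Function.Injective (algebraMap S R))
    (π : R →ₗ[S] S) (hπ : ∀ s : S, π (algebraMap S R s) = s)
    (I : Ideal S) :
    tightClosure p I = (I : Set S) := by
  have hinj0 : ∀ c : S, c ≠ 0 → algebraMap S R c ≠ 0 := fun c hc h =>
    hc (hinj (h.trans (map_zero _).symm))
  have : Nontrivial S := (algebraMap S R).domain_nontrivial
  obtain ⟨s, hs, hcard⟩ := hreg
  have hm : Ideal.ofList s.toList = maximalIdeal R := by
    rw [← hs]
    unfold Ideal.ofList
    congr 1
    ext a
    simp
  obtain ⟨-, hwr⟩ := regular_aux s.card R s.toList (by simp) hm hcard.le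
  refine Set.Subset.antisymm ?_ fun f hf => ⟨1, one_ne_zero, 0, fun e _ => ?_⟩
  · rintro f ⟨c, hc, e₀, h⟩
    have h1 : algebraMap S R f ∈ I.map (algebraMap S R) := by
      refine mem_of_frobenius_mem p hwr hm (hinj0 c hc) (e₀ := e₀) fun e he => ?_
      rw [← map_pow, ← map_mul]
      have h2 : bracketPow I (p ^ e) ≤
          ((I.map (algebraMap S R)).map (iterateFrobenius R p e)).comap (algebraMap S R) := by
        refine Ideal.span_le.mpr ?_
        rintro _ ⟨a, ha, rfl⟩
        rw [SetLike.mem_coe, Ideal.mem_comap, map_pow, ← iterateFrobenius_def]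
        exact Ideal.mem_map_of_mem _ (Ideal.mem_map_of_mem _ ha)
      exact h2 (h e he)
    -- the splitting maps the extension `IR` back into `I`
    have h3 : ∀ y ∈ I.map (algebraMap S R), π y ∈ I := by
      intro y hy
      have h4 : y ∈ (I • ⊤ : Submodule S R) := by
        rw [Ideal.smul_top_eq_map]
        exact hy
      refine Submodule.smul_induction_on h4 (fun a ha r _ => ?_) fun y z hy hz => ?_
      · rw [map_smul, smul_eq_mul]
        exact I.mul_mem_right _ ha
      · rw [map_add]
        exact I.add_mem hy hz
    simpa [hπ] using h3 _ h1
  · rw [one_mul]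
    exact Ideal.subset_span ⟨f, hf, rfl⟩
end

section
/- Let (R,m) be a complete Noetherian local integral domain of Krull dimension d and let M be an R-module. Then there exists a nonzero R-module homomorphism M → R (i.e., M is a solid R-module) if and only if the d-th local cohomology module H^d_m(M) is nonzero. -/
/-!
Let `T = H^d_m(R)`. The proof rests on the isomorphism `H^d_m(M) ≅ T ⊗ M`: a local ring of dimension
`d` has a system of parameters of length `d`, so local cohomology vanishes above degree `d`, and
peeling off one parameter `x` at a time along `M → R_x ⊗ M → (R_x / R) ⊗ M` identifies `H^d_m(M)` with
the tensor product of `M` and the top Čech cohomology of `R` (`LC.vanish`, `LC.top`). Here local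
cohomology is the direct limit `LC` of the modules `Ext^i(R/m^t, M)`, formed with `Abelian.Ext`, for
which long exact sequences are available; `localCohomology_subsingleton_iff_LC` transfers vanishing
between `LC` and Mathlib's `localCohomology`.

The module `T` is Artinian (`LC.artinian_quot`, by Melkersson's criterion), nonzero (Grothendieck's
non-vanishing theorem, `LC.nontrivial_quot`), and `T ⊗ N = 0` for every `N` killed by a nonzero element
of the domain `R`, because such an `N` is supported in dimension less than `d`. These properties are
collected in `exists_top`.

If `φ : M → R` is nonzero, then `R / im φ` is killed by a nonzero element, so
`T ⊗ (R / im φ) = 0`; by right exactness `T ⊗ M → T ⊗ R = T ≠ 0` is surjective and `T ⊗ M ≠ 0`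
(`tensor_nontrivial`).

Conversely, let `E` be the injective hull of the residue field. If `T ⊗ M ≠ 0`, there is a nonzero map
`T ⊗ M → E`, i.e. a nonzero map `M → Hom(T, E)`. As `R` is complete and `T` is Artinian, `Hom(T, E)` is
finitely generated (`finite_dual`); it is torsion-free because `T` is divisible. A finitely generated
torsion-free module over a domain has enough functionals (`exists_functional`), and composing with
one of them gives a nonzero map `M → R` (`exists_hom_of_tensor`).
-/

/-! ### Comparison of the two models of `Ext` -/

noncomputable section
open CategoryTheory Opposite Limits
namespace Solid
variable {R : Type} [CommRing R]

/-- The map of Hom complexes `Hom(Q, Y) → Hom(P, Y)` induced by a chain map `φ : P → Q`. -/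
abbrev yonMap {P Q : ChainComplex (ModuleCat.{0} R) ℕ} (φ : P ⟶ Q) (Y : ModuleCat.{0} R) :
    Q.linearYonedaObj R Y ⟶ P.linearYonedaObj R Y :=
  (HomologicalComplex.unopFunctor _ _).map
    ((((linearYoneda R (ModuleCat.{0} R)).obj Y).rightOp.mapHomologicalComplex _).map φ).op

lemma yonMap_f {P Q : ChainComplex (ModuleCat.{0} R) ℕ} (φ : P ⟶ Q) (Y : ModuleCat.{0} R) (n : ℕ)
    (f : Q.X n ⟶ Y) : ((yonMap φ Y).f n).hom f = φ.f n ≫ f := rfl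

lemma square_aux {C : Type*} [Category C] {a a' b b' c c' : C} (A' : a' ≅ b') (A : a ≅ b)
    (B' : b' ≅ c') (B : b ≅ c) (h : b' ⟶ b) (u : a' ⟶ a) (v : c' ⟶ c)
    (hu : u = A'.hom ≫ h ≫ A.inv) (hv : h ≫ B.hom = B'.hom ≫ v) :
    (B'.inv ≫ A'.inv) ≫ u = v ≫ B.inv ≫ A.inv := by
  have : h = B'.hom ≫ v ≫ B.inv := by rw [← Category.assoc, ← hv]; simp
  subst this hu
  simp

/-- Naturality in `X` of the computation of the derived-functor `Ext` by a projective resolution. -/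
lemma isoExt_nat {X' X Y : ModuleCat.{0} R} (P' : ProjectiveResolution X')
    (P : ProjectiveResolution X) (g : X' ⟶ X) (φ : P'.complex ⟶ P.complex)
    (w : φ ≫ P.π = P'.π ≫ (ChainComplex.single₀ _).map g) (n : ℕ) :
    ((Ext R (ModuleCat.{0} R) n).map g.op).app Y ≫ (P'.isoExt n Y).hom =
      (P.isoExt n Y).hom ≫ HomologicalComplex.homologyMap (yonMap φ Y) n := by
  have h := Functor.leftDerived_map_eq (((linearYoneda R (ModuleCat.{0} R)).obj Y).rightOp) n g φ w
  let F := ((linearYoneda R (ModuleCat.{0} R)).obj Y).rightOp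
  have h3 := square_aux (P'.isoLeftDerivedObj F n) (P.isoLeftDerivedObj F n)
    ((P'.complex.linearYonedaObj R Y).homologyOp n) ((P.complex.linearYonedaObj R Y).homologyOp n)
    _ _ _ h (HomologicalComplex.homologyOp_hom_naturality (yonMap φ Y) n)
  exact congrArg Quiver.Hom.unop h3

lemma homologyπ_surj (K : CochainComplex (ModuleCat.{0} R) ℕ) (n : ℕ) (h : K.homology n) :
    ∃ z : K.cycles n, K.homologyπ n z = h :=
  (ModuleCat.epi_iff_surjective _).1 inferInstance h

lemma homologyπ_eq_zero (K : CochainComplex (ModuleCat.{0} R) ℕ) (p n : ℕ)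
    (hp : (ComplexShape.up ℕ).prev n = p) (z : K.cycles n) :
    K.homologyπ n z = 0 ↔ ∃ y : K.X p, K.d p n y = K.iCycles n z := by
  have ex : (ShortComplex.mk (K.toCycles p n) (K.homologyπ n) (by simp)).Exact :=
    ShortComplex.exact_of_g_is_cokernel _ (K.homologyIsCokernel p n hp)
  rw [ShortComplex.moduleCat_exact_iff] at ex
  have inj : Function.Injective (K.iCycles n) := (ModuleCat.mono_iff_injective _).1 inferInstance
  have hd : ∀ y, K.iCycles n (K.toCycles p n y) = K.d p n y := fun y => by
    rw [← ConcreteCategory.comp_apply, K.toCycles_i]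
  constructor
  · intro h
    obtain ⟨y, hy⟩ := ex z h
    exact ⟨y, by rw [← hd]; exact congrArg _ hy⟩
  · rintro ⟨y, hy⟩
    have : z = K.toCycles p n y := inj (by rw [hd, hy])
    rw [this, ← ConcreteCategory.comp_apply, K.toCycles_comp_homologyπ]; rfl

lemma exists_cycle (K : CochainComplex (ModuleCat.{0} R) ℕ) (n : ℕ) (x : K.X n)
    (hx : K.d n (n+1) x = 0) : ∃ z : K.cycles n, K.iCycles n z = x := by
  have ex : (ShortComplex.mk (K.iCycles n) (K.d n (n+1)) (by simp)).Exact :=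
    ShortComplex.exact_of_f_is_kernel _ (K.cyclesIsKernel n (n+1) (by simp))
  rw [ShortComplex.moduleCat_exact_iff] at ex
  exact ex x hx

/-- The class `a` in the derived-functor `Ext` is represented by the cocycle `f : P_n → Y`. -/
def Rep {X Y : ModuleCat.{0} R} (P : ProjectiveResolution X) (n : ℕ)
    (a : ((Ext R (ModuleCat.{0} R) n).obj (op X)).obj Y) (f : P.complex.X n ⟶ Y) : Prop :=
  ∃ z : (HomologicalComplex.cycles (P.complex.linearYonedaObj R Y) n : ModuleCat.{0} R),
    HomologicalComplex.iCycles (P.complex.linearYonedaObj R Y) n z = f ∧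
    (P.isoExt n Y).hom a = HomologicalComplex.homologyπ (P.complex.linearYonedaObj R Y) n z

lemma Rep.cocycle {X Y : ModuleCat.{0} R} {P : ProjectiveResolution X} {n : ℕ}
    {a : ((Ext R (ModuleCat.{0} R) n).obj (op X)).obj Y} {f : P.complex.X n ⟶ Y}
    (h : Rep P n a f) : P.complex.d (n+1) n ≫ f = 0 := by
  obtain ⟨z, rfl, -⟩ := h
  have : HomologicalComplex.iCycles (P.complex.linearYonedaObj R Y) n ≫
    HomologicalComplex.d (P.complex.linearYonedaObj R Y) n (n+1) = 0 :=
    HomologicalComplex.iCycles_d _ _ _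
  exact ConcreteCategory.congr_hom this z

lemma exists_rep_of_class {X Y : ModuleCat.{0} R} (P : ProjectiveResolution X) (n : ℕ)
    (a : ((Ext R (ModuleCat.{0} R) n).obj (op X)).obj Y) : ∃ f, Rep P n a f := by
  obtain ⟨z, hz⟩ := homologyπ_surj _ n ((P.isoExt n Y).hom a)
  exact ⟨_, z, rfl, hz.symm⟩

lemma exists_rep_of_cocycle {X Y : ModuleCat.{0} R} (P : ProjectiveResolution X) (n : ℕ)
    (f : P.complex.X n ⟶ Y) (hf : P.complex.d (n+1) n ≫ f = 0) : ∃ a, Rep P n a f := by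
  obtain ⟨z, hz⟩ := exists_cycle (P.complex.linearYonedaObj R Y) n f hf
  refine ⟨(P.isoExt n Y).inv (HomologicalComplex.homologyπ (P.complex.linearYonedaObj R Y) n z), z, hz, ?_⟩
  rw [← ConcreteCategory.comp_apply, Iso.inv_hom_id]; rfl

lemma extMk_zero_iff' {X Y : ModuleCat.{0} R} (P : ProjectiveResolution X)
    (f : P.complex.X 0 ⟶ Y) (hf : P.complex.d 1 0 ≫ f = 0) :
    P.extMk f 1 rfl hf = 0 ↔ f = 0 := by
  refine ⟨fun h => ?_, fun h => by subst h; simp⟩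
  rw [← P.extEquivCohomologyClass.apply_eq_iff_eq,
    ProjectiveResolution.extEquivCohomologyClass_extMk, ProjectiveResolution.extEquivCohomologyClass_zero,
    CochainComplex.HomComplex.CohomologyClass.mk_eq_zero_iff,
    CochainComplex.HomComplex.Cocycle.toSingleMk_mem_coboundaries_iff _ _ _ _ _ 1 (by simp)] at h
  obtain ⟨g, hg⟩ := h
  have hz : IsZero (P.cochainComplex.X 1) :=
    CochainComplex.isZero_of_isStrictlyLE _ 0 1 (by simp)
  rw [hz.eq_of_src g 0, comp_zero] at hg
  rw [← cancel_epi (P.cochainComplexXIso (-(0:ℕ)) 0 rfl).hom]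
  simpa using hg.symm

lemma Rep.zero_iff {X Y : ModuleCat.{0} R} {P : ProjectiveResolution X} {n : ℕ}
    {a : ((Ext R (ModuleCat.{0} R) n).obj (op X)).obj Y} {f : P.complex.X n ⟶ Y}
    (h : Rep P n a f) : a = 0 ↔ P.extMk f (n+1) rfl h.cocycle = 0 := by
  generalize h.cocycle = hc
  obtain ⟨z, hz, h2⟩ := h
  have inj : Function.Injective (P.isoExt n Y (R := R)).hom :=
    (ModuleCat.mono_iff_injective _).1 inferInstance
  rw [← (inj.eq_iff), map_zero, h2]
  rcases n with _ | n
  · rw [extMk_zero_iff', homologyπ_eq_zero _ 0 0 (by simp)]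
    constructor
    · rintro ⟨y, hy⟩
      rw [← hz, ← hy]
      have : HomologicalComplex.d (P.complex.linearYonedaObj R Y) 0 0 = 0 :=
        HomologicalComplex.shape _ _ _ (by simp)
      rw [this]; rfl
    · rintro rfl
      exact ⟨0, by rw [hz, map_zero]; rfl⟩
  · rw [P.extMk_eq_zero_iff _ _ _ _ n rfl, homologyπ_eq_zero _ n (n+1) (by simp), hz]
    rfl

lemma Rep.map {X' X Y : ModuleCat.{0} R} {P' : ProjectiveResolution X'}
    {P : ProjectiveResolution X} (g : X' ⟶ X) (φ : P'.complex ⟶ P.complex)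
    (w : φ ≫ P.π = P'.π ≫ (ChainComplex.single₀ _).map g) {n : ℕ}
    {a : ((Ext R (ModuleCat.{0} R) n).obj (op X)).obj Y} {f : P.complex.X n ⟶ Y}
    (h : Rep P n a f) :
    Rep P' n (((Ext R (ModuleCat.{0} R) n).map g.op).app Y a) (φ.f n ≫ f) := by
  obtain ⟨z, rfl, h2⟩ := h
  refine ⟨HomologicalComplex.cyclesMap (yonMap φ Y) n z, ?_, ?_⟩
  · exact ConcreteCategory.congr_hom (HomologicalComplex.cyclesMap_i (yonMap φ Y) n) z
  · have := ConcreteCategory.congr_hom (isoExt_nat (Y := Y) P' P g φ w n) a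
    rw [ConcreteCategory.comp_apply, ConcreteCategory.comp_apply, h2] at this
    rw [this, ← ConcreteCategory.comp_apply, ← ConcreteCategory.comp_apply,
      HomologicalComplex.homologyπ_naturality]

/-- For an inverse system `X`, every class of `Ext^n(X s, Y)` dies in some `Ext^n(X t, Y)` for the
derived-functor `Ext` if and only if it does so for `Abelian.Ext`. Both are computed by cocycles on the
same projective resolutions. -/
lemma dies_iff {Y : ModuleCat.{0} R} (X : ℕ → ModuleCat.{0} R) (g : ∀ s t, s ≤ t → (X t ⟶ X s))
    (n : ℕ) :
    (∀ s, ∀ a : ((Ext R (ModuleCat.{0} R) n).obj (op (X s))).obj Y, ∃ t, ∃ h : s ≤ t,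
      ((Ext R (ModuleCat.{0} R) n).map (g s t h).op).app Y a = 0) ↔
    (∀ s, ∀ a : Abelian.Ext.{0} (X s) Y n, ∃ t, ∃ h : s ≤ t,
      (Abelian.Ext.mk₀ (g s t h)).comp a (zero_add n) = 0) := by
  have key : ∀ (s t) (h : s ≤ t) (a : ((Ext R (ModuleCat.{0} R) n).obj (op (X s))).obj Y) f
      (hr : Rep (projectiveResolution (X s)) n a f),
      ((Ext R (ModuleCat.{0} R) n).map (g s t h).op).app Y a = 0 ↔
      (Abelian.Ext.mk₀ (g s t h)).comp
        ((projectiveResolution (X s)).extMk f (n+1) rfl hr.cocycle) (zero_add n) = 0 := by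
    intro s t h a f hr
    have w := ProjectiveResolution.lift_commutes (g s t h) (projectiveResolution (X t))
      (projectiveResolution (X s))
    let φ : ProjectiveResolution.Hom (projectiveResolution (X t)) (projectiveResolution (X s))
      (g s t h) := ⟨ProjectiveResolution.lift (g s t h) _ _, by
        rw [← HomologicalComplex.comp_f, w, HomologicalComplex.comp_f]⟩
    rw [(hr.map (g s t h) φ.hom w).zero_iff, ProjectiveResolution.mk₀_comp_extMk _ _ _ _ φ]
  constructor
  · intro H s a
    obtain ⟨f, hf, rfl⟩ := (projectiveResolution (X s)).extMk_surjective a (n+1) rfl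
    obtain ⟨a, ha⟩ := exists_rep_of_cocycle _ n f hf
    obtain ⟨t, h, ht⟩ := H s a
    exact ⟨t, h, (key s t h a f ha).1 ht⟩
  · intro H s a
    obtain ⟨f, hf⟩ := exists_rep_of_class (projectiveResolution (X s)) n a
    obtain ⟨t, h, ht⟩ := H s (ProjectiveResolution.extMk _ f (n+1) rfl hf.cocycle)
    exact ⟨t, h, (key s t h a f hf).2 ht⟩

/-- The transition map `R/J^t → R/J^s`. -/
def quotPow (J : Ideal R) (s t : ℕ) (h : s ≤ t) :
    ModuleCat.of R (R ⧸ J ^ t) ⟶ ModuleCat.of R (R ⧸ J ^ s) :=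
  ModuleCat.ofHom (Submodule.mapQ _ _ LinearMap.id (Ideal.pow_le_pow_right h))

/-- `H^n_J(M) = 0` if and only if every class of `Ext^n(R/J^s, M)` dies in some `Ext^n(R/J^t, M)`. -/
lemma localCohomology_subsingleton_iff (J : Ideal R) (n : ℕ) (M : ModuleCat.{0} R) :
    Subsingleton ((localCohomology J n).obj M) ↔
    (∀ s, ∀ a : Abelian.Ext.{0} (ModuleCat.of R (R ⧸ J ^ s)) M n, ∃ t, ∃ h : s ≤ t,
      (Abelian.Ext.mk₀ (quotPow J s t h)).comp a (zero_add n) = 0) := by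
  rw [← dies_iff (fun t => ModuleCat.of R (R ⧸ J ^ t)) (quotPow J) n]
  let D := localCohomology.diagram (localCohomology.idealPowersDiagram J) n
  let ev := (evaluation (ModuleCat.{0} R) (ModuleCat.{0} R)).obj M
  let e : (localCohomology J n).obj M ≅ colimit (D ⋙ ev) := preservesColimitIso ev D
  have hs : Subsingleton ((localCohomology J n).obj M) ↔ Subsingleton ↑(colimit (D ⋙ ev)) :=
    e.toLinearEquiv.toEquiv.subsingleton_congr
  rw [hs]
  constructor
  · intro H s a
    have h0 : colimit.ι (D ⋙ ev) (op (op s)) a = colimit.ι (D ⋙ ev) (op (op s)) (0 : (D ⋙ ev).obj (op (op s))) :=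
      Subsingleton.elim _ _
    obtain ⟨k, f, g, hfg⟩ := Concrete.colimit_exists_of_rep_eq (D ⋙ ev) _ _ h0
    have hl : s ≤ k.unop.unop := leOfHom f.unop.unop
    refine ⟨k.unop.unop, hl, ?_⟩
    rw [map_zero] at hfg
    exact hfg
  · intro H
    refine ⟨fun x y => ?_⟩
    have : ∀ x : ↑(colimit (D ⋙ ev)), x = 0 := by
      intro x
      obtain ⟨j, a, rfl⟩ := Concrete.colimit_exists_rep (D ⋙ ev) x
      obtain ⟨t, h, ht⟩ := H j.unop.unop a
      let f : j ⟶ op (op t) := (homOfLE h).op.op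
      have h1 : (D ⋙ ev).map f a = 0 := ht
      rw [← colimit.w (D ⋙ ev) f, ConcreteCategory.comp_apply, h1, map_zero]
    rw [this x, this y]

end Solid
end

/-! ### Local cohomology as a direct limit of `Ext` modules -/

noncomputable section
open CategoryTheory Opposite Limits
namespace Solid
variable {R : Type} [CommRing R]

lemma quotPow_comp (J : Ideal R) (s t u : ℕ) (h : s ≤ t) (h' : t ≤ u) :
    quotPow J t u h' ≫ quotPow J s t h = quotPow J s u (h.trans h') := by
  refine ModuleCat.hom_ext (LinearMap.ext fun x => ?_)
  obtain ⟨x, rfl⟩ := Ideal.Quotient.mk_surjective x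
  rfl

lemma quotPow_refl (J : Ideal R) (s : ℕ) : quotPow J s s le_rfl = 𝟙 _ := by
  refine ModuleCat.hom_ext (LinearMap.ext fun x => ?_)
  obtain ⟨x, rfl⟩ := Ideal.Quotient.mk_surjective x
  rfl

/-- The module `Ext^i(R/J^t, M)`. -/
abbrev ExtPow (J : Ideal R) (i : ℕ) (M : Type) [AddCommGroup M] [Module R M] (t : ℕ) : Type :=
  Abelian.Ext.{0} (ModuleCat.of R (R ⧸ J ^ t)) (ModuleCat.of R M) i

section
variable (J : Ideal R) (i : ℕ) (M : Type) [AddCommGroup M] [Module R M]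

/-- The transition maps `Ext^i(R/J^s, M) → Ext^i(R/J^t, M)`. -/
def ExtPow.trans (s t : ℕ) (h : s ≤ t) : ExtPow J i M s →ₗ[R] ExtPow J i M t where
  toFun a := (Abelian.Ext.mk₀ (quotPow J s t h)).comp a (zero_add i)
  map_add' a b := by simp
  map_smul' r a := by simp

/-- Local cohomology as the direct limit of the modules `Ext^i(R/J^t, M)`. -/
def LC : Type := Module.DirectLimit (ExtPow J i M) (ExtPow.trans J i M)

instance : AddCommGroup (LC J i M) := inferInstanceAs (AddCommGroup (Module.DirectLimit _ _))
instance : Module R (LC J i M) := inferInstanceAs (Module R (Module.DirectLimit _ _))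

instance : DirectedSystem (ExtPow J i M) (ExtPow.trans J i M · · ·) where
  map_self s x := by simp [ExtPow.trans, quotPow_refl]
  map_map s t u h h' x := by
    simp only [ExtPow.trans, LinearMap.coe_mk, AddHom.coe_mk]
    rw [← Abelian.Ext.comp_assoc_of_second_deg_zero, Abelian.Ext.mk₀_comp_mk₀, quotPow_comp]

/-- The canonical map `Ext^i(R/J^t, M) → H^i_J(M)`. -/
def LC.of (t : ℕ) : ExtPow J i M t →ₗ[R] LC J i M := Module.DirectLimit.of R ℕ _ _ t

variable {J i M}

lemma LC.exists_of (z : LC J i M) : ∃ t x, LC.of J i M t x = z := Module.DirectLimit.exists_of z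

lemma LC.of_trans (s t : ℕ) (h : s ≤ t) (x) :
    LC.of J i M t (ExtPow.trans J i M s t h x) = LC.of J i M s x := Module.DirectLimit.of_f

lemma LC.of_eq_zero (s : ℕ) (x) (hx : LC.of J i M s x = 0) :
    ∃ t, ∃ h : s ≤ t, ExtPow.trans J i M s t h x = 0 := Module.DirectLimit.of.zero_exact hx

/-- Mathlib's local cohomology and the direct limit `LC` vanish simultaneously. -/
lemma localCohomology_subsingleton_iff_LC :
    Subsingleton ((localCohomology J i).obj (ModuleCat.of R M)) ↔ Subsingleton (LC J i M) := by
  rw [localCohomology_subsingleton_iff]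
  constructor
  · intro H
    refine subsingleton_of_forall_eq 0 fun z => ?_
    obtain ⟨s, x, rfl⟩ := LC.exists_of z
    obtain ⟨t, h, ht⟩ := H s x
    rw [← LC.of_trans s t h, ExtPow.trans]
    exact (congrArg _ ht).trans (map_zero _)
  · intro H s a
    exact LC.of_eq_zero s a (Subsingleton.elim _ _)

lemma LC.torsion (z : LC J i M) : ∃ t, ∀ r ∈ J ^ t, r • z = 0 := by
  obtain ⟨t, x, rfl⟩ := LC.exists_of z
  refine ⟨t, fun r hr => ?_⟩
  rw [← map_smul]
  have : r • x = 0 := by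
    rw [← Abelian.Ext.mk₀_id_comp x, ← Abelian.Ext.smul_comp, ← Abelian.Ext.mk₀_smul]
    have h0 : r • 𝟙 (ModuleCat.of R (R ⧸ J ^ t)) = 0 := by
      refine ModuleCat.hom_ext (LinearMap.ext fun y => ?_)
      obtain ⟨y, rfl⟩ := Ideal.Quotient.mk_surjective y
      change r • (Ideal.Quotient.mk _ y) = 0
      rw [← Ideal.Quotient.mk_eq_mk, ← Submodule.Quotient.mk_smul, Submodule.Quotient.mk_eq_zero]
      exact Ideal.mul_mem_right _ _ hr
    rw [h0]; simp
  rw [this, map_zero]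

end

section
variable (J : Ideal R) (i : ℕ) {M N P : Type} [AddCommGroup M] [Module R M] [AddCommGroup N]
  [Module R N] [AddCommGroup P] [Module R P]

/-- Postcomposition with a class in `Ext^j(M, N)`, on the local cohomology modules. -/
def LC.post {j k : ℕ} (e : Abelian.Ext.{0} (ModuleCat.of R M) (ModuleCat.of R N) j)
    (h : i + j = k) : LC J i M →ₗ[R] LC J k N :=
  Module.DirectLimit.map (fun t =>
    { toFun := fun a => a.comp e h, map_add' := by simp, map_smul' := by simp }) (by
      intro s t hst
      ext x
      simp only [ExtPow.trans, LinearMap.comp_apply, LinearMap.coe_mk, AddHom.coe_mk]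
      rw [Abelian.Ext.comp_assoc]
      lia)

lemma LC.post_of {j k : ℕ} (e : Abelian.Ext.{0} (ModuleCat.of R M) (ModuleCat.of R N) j)
    (h : i + j = k) (t : ℕ) (x) : LC.post J i e h (LC.of J i M t x) = LC.of J k N t (x.comp e h) :=
  Module.DirectLimit.map_apply_of _ _ _

/-- Levelwise exactness passes to the direct limit. -/
lemma LC.post_exact {j k j' k' : ℕ} (e : Abelian.Ext.{0} (ModuleCat.of R M) (ModuleCat.of R N) j)
    (h : i + j = k) (e' : Abelian.Ext.{0} (ModuleCat.of R N) (ModuleCat.of R P) j')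
    (h' : k + j' = k') (h0 : e.comp e' rfl = 0)
    (ex : ∀ t (x : ExtPow J k N t), x.comp e' h' = 0 → ∃ y : ExtPow J i M t, y.comp e h = x) :
    Function.Exact (LC.post J i e h) (LC.post J k e' h') := by
  intro z
  constructor
  · intro hz
    obtain ⟨s, x, rfl⟩ := LC.exists_of z
    rw [LC.post_of] at hz
    obtain ⟨t, hst, ht⟩ := LC.of_eq_zero s _ hz
    obtain ⟨y, hy⟩ := ex t (ExtPow.trans J k N s t hst x) (by
      rw [← ht]
      simp only [ExtPow.trans, LinearMap.coe_mk, AddHom.coe_mk]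
      rw [Abelian.Ext.comp_assoc]
      lia)
    exact ⟨LC.of J i M t y, by rw [LC.post_of, hy, LC.of_trans]⟩
  · rintro ⟨y, rfl⟩
    obtain ⟨s, y, rfl⟩ := LC.exists_of y
    rw [LC.post_of, LC.post_of, Abelian.Ext.comp_assoc _ _ _ _ rfl (by lia), h0]
    simp

/-- Functoriality of local cohomology. -/
def LC.map (f : M →ₗ[R] N) : LC J i M →ₗ[R] LC J i N :=
  LC.post J i (Abelian.Ext.mk₀ (ModuleCat.ofHom f)) (add_zero i)

lemma LC.map_of (f : M →ₗ[R] N) (t : ℕ) (x) : LC.map J i f (LC.of J i M t x) =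
    LC.of J i N t (x.comp (Abelian.Ext.mk₀ (ModuleCat.ofHom f)) (add_zero i)) :=
  LC.post_of _ _ _ _ _ _

lemma LC.map_comp (f : M →ₗ[R] N) (g : N →ₗ[R] P) (z) :
    LC.map J i (g ∘ₗ f) z = LC.map J i g (LC.map J i f z) := by
  obtain ⟨s, x, rfl⟩ := LC.exists_of z
  rw [LC.map_of, LC.map_of, LC.map_of, ModuleCat.ofHom_comp, ← Abelian.Ext.mk₀_comp_mk₀,
    Abelian.Ext.comp_assoc_of_third_deg_zero]

lemma LC.map_smul_id (r : R) (z) :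
    LC.map J i (r • LinearMap.id : M →ₗ[R] M) z = r • z := by
  obtain ⟨s, x, rfl⟩ := LC.exists_of z
  rw [LC.map_of]
  have : ModuleCat.ofHom (r • LinearMap.id : M →ₗ[R] M) = r • 𝟙 (ModuleCat.of R M) := rfl
  rw [this, Abelian.Ext.mk₀_smul, Abelian.Ext.comp_smul, Abelian.Ext.comp_mk₀_id, map_smul]

lemma LC.map_id (z) : LC.map J i (LinearMap.id : M →ₗ[R] M) z = z := by
  simpa using LC.map_smul_id J i (1 : R) z

lemma LC.map_zero_hom (z) : LC.map J i (0 : M →ₗ[R] N) z = 0 := by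
  obtain ⟨s, x, rfl⟩ := LC.exists_of z
  rw [LC.map_of]
  simp

/-- The long exact sequence of local cohomology. -/
lemma LC.les (f : M →ₗ[R] N) (g : N →ₗ[R] P) (hf : Function.Injective f)
    (hg : Function.Surjective g) (h : Function.Exact f g) :
    ∃ δ : ∀ i, LC J i P →ₗ[R] LC J (i + 1) M,
      (∀ i, Function.Exact (LC.map J i f) (LC.map J i g)) ∧
      (∀ i, Function.Exact (LC.map J i g) (δ i)) ∧
      (∀ i, Function.Exact (δ i) (LC.map J (i+1) f)) := by
  let S : ShortComplex (ModuleCat.{0} R) := ShortComplex.mk (ModuleCat.ofHom f)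
    (ModuleCat.ofHom g) (by ext x; exact (h _).2 ⟨x, rfl⟩)
  have hS : S.ShortExact :=
    { exact := (ShortComplex.moduleCat_exact_iff _).2 fun x hx => (h x).1 hx
      mono_f := (ModuleCat.mono_iff_injective _).2 hf
      epi_g := (ModuleCat.epi_iff_surjective _).2 hg }
  refine ⟨fun i => LC.post J i hS.extClass rfl, fun i => ?_, fun i => ?_, fun i => ?_⟩
  · refine LC.post_exact J i _ _ _ _ ?_ fun t x hx =>
      Abelian.Ext.covariant_sequence_exact₂ _ hS x hx
    rw [Abelian.Ext.mk₀_comp_mk₀]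
    exact (congrArg _ S.zero).trans (Abelian.Ext.mk₀_zero _ _)
  · refine LC.post_exact J i _ _ _ _ ?_ fun t x hx =>
      Abelian.Ext.covariant_sequence_exact₃ _ hS x rfl hx
    exact hS.comp_extClass
  · refine LC.post_exact J i _ _ _ _ ?_ fun t x hx =>
      Abelian.Ext.covariant_sequence_exact₁ _ hS x hx rfl
    exact hS.extClass_comp

lemma LC.subsingleton_of_injective [Module.Injective R M] : Subsingleton (LC J (i+1) M) := by
  refine subsingleton_of_forall_eq 0 fun z => ?_
  obtain ⟨s, x, rfl⟩ := LC.exists_of z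
  have : Injective (ModuleCat.of R M) := Module.injective_object_of_injective_module R M
  rw [Abelian.Ext.eq_zero_of_injective x, map_zero]

lemma linearEquiv₀_mk₀ {X Y : ModuleCat.{0} R} (f : X ⟶ Y) :
    Abelian.Ext.linearEquiv₀ (R := R) (Abelian.Ext.mk₀ f) = f :=
  (Abelian.Ext.linearEquiv₀ (R := R)).apply_symm_apply f

variable (M) in
/-- The map `H^0_J(M) → M` given by evaluation at `1`. -/
def LC.eval : LC J 0 M →ₗ[R] M :=
  Module.DirectLimit.lift R ℕ _ _ (fun t =>
    { toFun := fun a => (Abelian.Ext.linearEquiv₀ (R := R) a).hom (Ideal.Quotient.mk _ 1)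
      map_add' := by simp
      map_smul' := by simp }) (by
    intro s t h x
    obtain ⟨y, rfl⟩ := (Abelian.Ext.linearEquiv₀ (R := R)).symm.surjective x
    have e1 := linearEquiv₀_mk₀ y
    have e2 := linearEquiv₀_mk₀ (quotPow J s t h ≫ y)
    simp only [ExtPow.trans, LinearMap.coe_mk, AddHom.coe_mk,
      Abelian.Ext.linearEquiv₀_symm_apply, Abelian.Ext.mk₀_comp_mk₀, e1, e2]
    rfl)

lemma LC.eval_of (t : ℕ) (y : ModuleCat.of R (R ⧸ J ^ t) ⟶ ModuleCat.of R M) :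
    LC.eval J M (LC.of J 0 M t (Abelian.Ext.mk₀ y)) = y.hom (Ideal.Quotient.mk _ 1) := by
  refine (Module.DirectLimit.lift_of _ _ _).trans ?_
  exact congrArg (fun f => f.hom (Ideal.Quotient.mk _ 1)) (linearEquiv₀_mk₀ y)

lemma LC.exists_of_zero (z : LC J 0 M) : ∃ (t : ℕ)
    (y : ModuleCat.of R (R ⧸ J ^ t) ⟶ ModuleCat.of R M),
      LC.of J 0 M t (Abelian.Ext.mk₀ y) = z := by
  obtain ⟨t, x, rfl⟩ := LC.exists_of z
  obtain ⟨y, rfl⟩ := (Abelian.Ext.linearEquiv₀ (R := R)).symm.surjective x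
  exact ⟨t, y, rfl⟩

lemma LC.eval_map (f : M →ₗ[R] N) (z) : LC.eval J N (LC.map J 0 f z) = f (LC.eval J M z) := by
  obtain ⟨t, y, rfl⟩ := LC.exists_of_zero J z
  rw [LC.map_of, Abelian.Ext.mk₀_comp_mk₀, LC.eval_of, LC.eval_of]
  rfl

lemma LC.eval_injective : Function.Injective (LC.eval J M) := by
  rw [injective_iff_map_eq_zero]
  intro z hz
  obtain ⟨t, y, rfl⟩ := LC.exists_of_zero J z
  rw [LC.eval_of] at hz
  have : y = 0 := by
    refine ModuleCat.hom_ext (LinearMap.ext fun x => ?_)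
    obtain ⟨x, rfl⟩ := Ideal.Quotient.mk_surjective x
    have h1 : (Ideal.Quotient.mk (J ^ t) x) = x • (Ideal.Quotient.mk (J ^ t) 1) := by
      rw [← Ideal.Quotient.mk_eq_mk, ← Ideal.Quotient.mk_eq_mk, ← Submodule.Quotient.mk_smul]
      simp
    have h2 : y.hom (Ideal.Quotient.mk (J ^ t) x) = 0 := by rw [h1]; erw [_root_.map_smul, hz]; simp
    exact h2
  rw [this]; simp

lemma LC.exists_eval (m : M) (t : ℕ) (hm : ∀ r ∈ J ^ t, r • m = 0) : ∃ z, LC.eval J M z = m := by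
  let f : (R ⧸ J ^ t) →ₗ[R] M := Submodule.liftQ _ (LinearMap.toSpanSingleton R M m)
    (fun r hr => by simpa using hm r hr)
  refine ⟨LC.of J 0 M t (Abelian.Ext.mk₀ (ModuleCat.ofHom f)), ?_⟩
  rw [LC.eval_of]
  change f (Submodule.Quotient.mk 1) = m
  exact (Submodule.liftQ_apply _ _ _).trans (by simp)

end
end Solid
end

/-! ### Torsion modules -/

noncomputable section
open CategoryTheory Opposite Limits TensorProduct
namespace Solid
variable {R : Type} [CommRing R]

/-- Every element of `M` is killed by a power of the ideal `J`. -/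
def Tors (J : Ideal R) (M : Type) [AddCommGroup M] [Module R M] : Prop :=
  ∀ m : M, ∃ t : ℕ, ∀ r ∈ J ^ t, r • m = 0

section
variable {J : Ideal R} {M N P : Type} [AddCommGroup M] [Module R M] [AddCommGroup N]
  [Module R N] [AddCommGroup P] [Module R P]

lemma Tors.of_injective (h : Tors J N) (f : M →ₗ[R] N) (hf : Function.Injective f) : Tors J M := by
  intro m
  obtain ⟨t, ht⟩ := h (f m)
  exact ⟨t, fun r hr => hf (by rw [map_smul, ht r hr, map_zero])⟩

lemma Tors.of_surjective (h : Tors J M) (f : M →ₗ[R] N) (hf : Function.Surjective f) :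
    Tors J N := by
  intro n
  obtain ⟨m, rfl⟩ := hf n
  obtain ⟨t, ht⟩ := h m
  exact ⟨t, fun r hr => by rw [← map_smul, ht r hr, map_zero]⟩

lemma LC.tors (i : ℕ) : Tors J (LC J i M) := fun z => LC.torsion z

lemma LC.eval_bijective (h : Tors J M) : Function.Bijective (LC.eval J M) :=
  ⟨LC.eval_injective J, fun m => by obtain ⟨t, ht⟩ := h m; exact LC.exists_eval J m t ht⟩

/-- `H^0_J(M) ≅ M` for a `J`-torsion module. -/
def LC.zeroEquiv (h : Tors J M) : LC J 0 M ≃ₗ[R] M :=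
  LinearEquiv.ofBijective (LC.eval J M) (LC.eval_bijective h)

lemma LC.map_zero_injective (f : M →ₗ[R] N) (hf : Function.Injective f) :
    Function.Injective (LC.map J 0 f) := by
  intro x y h
  apply LC.eval_injective J
  apply hf
  rw [← LC.eval_map, ← LC.eval_map, h]

/-- The `J`-power torsion submodule. -/
def gam (J : Ideal R) (M : Type) [AddCommGroup M] [Module R M] : Submodule R M where
  carrier := {m | ∃ t : ℕ, ∀ r ∈ J ^ t, r • m = 0}
  zero_mem' := ⟨0, by simp⟩
  add_mem' := by
    rintro a b ⟨s, hs⟩ ⟨t, ht⟩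
    refine ⟨max s t, fun r hr => ?_⟩
    rw [smul_add, hs r (Ideal.pow_le_pow_right (le_max_left _ _) hr),
      ht r (Ideal.pow_le_pow_right (le_max_right _ _) hr), add_zero]
  smul_mem' := by
    rintro c a ⟨s, hs⟩
    exact ⟨s, fun r hr => by rw [smul_comm, hs r hr, smul_zero]⟩

lemma tors_gam : Tors J (gam J M) := by
  rintro ⟨m, t, ht⟩
  exact ⟨t, fun r hr => Subtype.ext (ht r hr)⟩

lemma Tors.exists_pow [Module.Finite R M] (h : Tors J M) :
    ∃ t : ℕ, ∀ r ∈ J ^ t, ∀ m : M, r • m = 0 := by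
  obtain ⟨S, hS⟩ := Module.Finite.fg_top (R := R) (M := M)
  choose f hf using h
  refine ⟨S.sup f, fun r hr m => ?_⟩
  have hm : m ∈ Submodule.span R (S : Set M) := hS ▸ trivial
  induction hm using Submodule.span_induction with
  | mem x hx => exact hf x r (Ideal.pow_le_pow_right (Finset.le_sup hx) hr)
  | zero => simp
  | add x y _ _ hx hy => rw [smul_add, hx, hy, add_zero]
  | smul c x _ hx => rw [smul_comm, hx, smul_zero]

/-- The `J`-power torsion submodule of an injective module is injective, by Baer's criterion and the
Artin-Rees lemma. -/
lemma gam_injective [IsNoetherianRing R] [Module.Injective R M] : Module.Injective R (gam J M) := by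
  refine Module.Baer.injective fun I g => ?_
  have hr : Tors J (LinearMap.range g) := tors_gam.of_injective (LinearMap.range g).subtype
    (Submodule.injective_subtype _)
  obtain ⟨t, ht⟩ := hr.exists_pow
  obtain ⟨k, hk⟩ := Ideal.exists_pow_inf_eq_pow_smul J (I : Submodule R R)
  let n := k + t
  have h1 : J ^ n ⊓ I ≤ J ^ t • I := by
    have := hk n (by simp [n])
    simp only [n, Nat.add_sub_cancel_left, smul_eq_mul, Ideal.mul_top] at this
    rw [this]
    exact Ideal.mul_mono_right inf_le_right
  have h2 : ∀ x : R, x ∈ J ^ t • I → ∃ hx : x ∈ I, g ⟨x, hx⟩ = 0 := by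
    intro x hx
    refine Submodule.smul_induction_on (p := fun x => ∃ hx : x ∈ I, g ⟨x, hx⟩ = 0) hx ?_ ?_
    · intro r hr y hy
      refine ⟨I.mul_mem_left r hy, ?_⟩
      have : (⟨r • y, I.mul_mem_left r hy⟩ : I) = r • ⟨y, hy⟩ := rfl
      rw [this, map_smul]
      exact congrArg Subtype.val (ht r hr ⟨g ⟨y, hy⟩, ⟨_, rfl⟩⟩)
    · rintro x y ⟨hx, hx'⟩ ⟨hy, hy'⟩
      refine ⟨I.add_mem hx hy, ?_⟩
      have : (⟨x + y, I.add_mem hx hy⟩ : I) = ⟨x, hx⟩ + ⟨y, hy⟩ := rfl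
      rw [this, map_add, hx', hy', add_zero]
  -- `g` factors through `I / (I ∩ J^n)`, which embeds in `R / J^n`
  let K : Submodule R I := Submodule.comap I.subtype (J ^ n)
  let j : (I ⧸ K) →ₗ[R] (R ⧸ J ^ n) := Submodule.mapQ K (J ^ n) I.subtype le_rfl
  have hj : Function.Injective j := by
    rw [← LinearMap.ker_eq_bot, Submodule.ker_mapQ]
    exact Submodule.mkQ_map_self K
  let gK : (I ⧸ K) →ₗ[R] M := Submodule.liftQ K ((gam J M).subtype ∘ₗ g) (by
    intro x hx
    obtain ⟨_, h3⟩ := h2 x (h1 ⟨hx, x.2⟩)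
    simp [LinearMap.mem_ker, h3])
  obtain ⟨h, hh⟩ := Module.Injective.out j hj gK
  refine ⟨(h ∘ₗ (Submodule.mkQ (J ^ n))).codRestrict (gam J M) fun c => ⟨n, fun r hr => ?_⟩, ?_⟩
  · rw [← map_smul, smul_eq_mul]
    have : (J ^ n).mkQ (r * c) = 0 := by
      rw [Submodule.mkQ_apply, Submodule.Quotient.mk_eq_zero]; exact Ideal.mul_mem_right _ _ hr
    rw [LinearMap.comp_apply, this, map_zero]
  · intro x hx
    refine Subtype.ext ?_
    exact hh (Submodule.Quotient.mk ⟨x, hx⟩)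

variable (R M) in
lemma exists_injective_embedding : ∃ (E : Type) (_ : AddCommGroup E) (_ : Module R E)
    (_ : Module.Injective R E) (f : M →ₗ[R] E), Function.Injective f := by
  let X : ModuleCat.{0} R := ModuleCat.of R M
  let E : ModuleCat.{0} R := Injective.under X
  have hE : Injective (ModuleCat.of R E) := inferInstanceAs (Injective (Injective.under X))
  exact ⟨E, inferInstance, inferInstance, Module.injective_module_of_injective_object R _,
    (Injective.ι X).hom, (ModuleCat.mono_iff_injective _).1 inferInstance⟩

lemma exact_subsingleton {f : M →ₗ[R] N} {g : N →ₗ[R] P} (h : Function.Exact f g)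
    (hM : Subsingleton M) (hP : Subsingleton P) : Subsingleton N := by
  refine subsingleton_of_forall_eq 0 fun n => ?_
  obtain ⟨m, rfl⟩ := (h n).1 (Subsingleton.elim _ _)
  rw [Subsingleton.elim m 0, map_zero]

lemma exact_surjective {f : M →ₗ[R] N} {g : N →ₗ[R] P} (h : Function.Exact f g)
    (hP : Subsingleton P) : Function.Surjective f :=
  fun n => (h n).1 (Subsingleton.elim _ _)

lemma exact_injective {f : M →ₗ[R] N} {g : N →ₗ[R] P} (h : Function.Exact f g)
    (hM : Subsingleton M) : Function.Injective g := by
  rw [injective_iff_map_eq_zero]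
  intro n hn
  obtain ⟨m, rfl⟩ := (h n).1 hn
  rw [Subsingleton.elim m 0, map_zero]

lemma Tors.map_zero_surjective (hN : Tors J N) (f : M →ₗ[R] N) (hM : Tors J M)
    (hf : Function.Surjective f) :
    Function.Surjective (LC.map J 0 f) := by
  intro y
  obtain ⟨m, hm⟩ := hf (LC.eval J N y)
  obtain ⟨x, rfl⟩ := (LC.eval_bijective hM).2 m
  exact ⟨x, (LC.eval_bijective hN).1 (by rw [LC.eval_map, hm])⟩

lemma Tors.exists_embedding [IsNoetherianRing R] (h : Tors J M) :
    ∃ (E : Type) (_ : AddCommGroup E) (_ : Module R E) (_ : Module.Injective R E)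
      (f : M →ₗ[R] E), Tors J E ∧ Function.Injective f := by
  obtain ⟨E, _, _, _, f, hf⟩ := exists_injective_embedding R M
  refine ⟨gam J E, inferInstance, inferInstance, gam_injective, f.codRestrict _ fun m => ?_,
    tors_gam, fun x y hxy => hf (congrArg Subtype.val hxy)⟩
  obtain ⟨t, ht⟩ := h m
  exact ⟨t, fun r hr => by rw [← map_smul, ht r hr, map_zero]⟩

/-- Torsion modules are acyclic, by dimension shifting along embeddings into torsion injective
modules. -/
lemma LC.subsingleton_of_tors [IsNoetherianRing R] (i : ℕ) (M : Type) [AddCommGroup M] [Module R M]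
    (h : Tors J M) : Subsingleton (LC J (i+1) M) := by
  induction i generalizing M with
  | zero =>
    obtain ⟨E, _, _, _, f, hE, hf⟩ := h.exists_embedding
    have hg := (LinearMap.range f).mkQ_surjective
    have hC : Tors J (E ⧸ LinearMap.range f) := hE.of_surjective (LinearMap.range f).mkQ hg
    obtain ⟨δ, -, h2, h3⟩ := LC.les J f (LinearMap.range f).mkQ hf hg
      (LinearMap.exact_map_mkQ_range f)
    have hs := hC.map_zero_surjective _ hE hg
    have hδ : Function.Surjective (δ 0) := exact_surjective (h3 0) (LC.subsingleton_of_injective J 0)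
    refine subsingleton_of_forall_eq 0 fun x => ?_
    obtain ⟨y, rfl⟩ := hδ x
    exact (h2 0 y).2 (hs y)
  | succ i ih =>
    obtain ⟨E, _, _, _, f, hE, hf⟩ := h.exists_embedding
    have hg := (LinearMap.range f).mkQ_surjective
    obtain ⟨δ, -, h2, h3⟩ := LC.les J f (LinearMap.range f).mkQ hf hg
      (LinearMap.exact_map_mkQ_range f)
    exact exact_subsingleton (h3 (i+1)) (ih _ (hE.of_surjective _ hg))
      (LC.subsingleton_of_injective J (i+1))

/-- If some `x ∈ J` acts bijectively on `M`, it does so on local cohomology, which is also `x`-power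
torsion and therefore zero. -/
lemma LC.subsingleton_of_bijective {x : R} (hx : x ∈ J)
    (h : Function.Bijective (x • LinearMap.id : M →ₗ[R] M)) (i : ℕ) : Subsingleton (LC J i M) := by
  have inj : ∀ z : LC J i M, x • z = 0 → z = 0 := by
    intro z hz
    let e := LinearEquiv.ofBijective _ h
    rw [← LC.map_smul_id] at hz
    have h1 := LC.map_comp J i (x • LinearMap.id : M →ₗ[R] M) e.symm.toLinearMap z
    have h2 : e.symm.toLinearMap ∘ₗ (x • LinearMap.id : M →ₗ[R] M) = LinearMap.id := by
      ext m; exact e.symm_apply_apply m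
    rw [hz, h2, LC.map_id, map_zero] at h1
    exact h1
  have inj' : ∀ (t : ℕ) (z : LC J i M), x ^ t • z = 0 → z = 0 := by
    intro t
    induction t with
    | zero => intro z hz; simpa using hz
    | succ t ih => intro z hz; exact ih _ (inj _ (by rw [smul_smul, ← pow_succ', hz]))
  refine subsingleton_of_forall_eq 0 fun z => ?_
  obtain ⟨t, ht⟩ := LC.torsion z
  exact inj' t z (ht _ (Ideal.pow_mem_pow hx t))

end
end Solid
end

/-! ### Vanishing and right exactness in the top degree -/

noncomputable section
open CategoryTheory Opposite Limits TensorProduct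
namespace Solid
variable {R : Type} [CommRing R]

/-- The module `R_x / R` (more precisely, modulo the image of `R`), i.e. `H^1_{(x)}(R)`. -/
abbrev TX (x : R) : Type :=
  Localization.Away x ⧸ LinearMap.range (Algebra.linearMap R (Localization.Away x))

/-- The module underlying `Cech l`, bundled so that it can be defined by recursion on `l`. -/
def cechMod : List R → ModuleCat.{0} R
  | [] => ModuleCat.of R R
  | x :: l => ModuleCat.of R (cechMod l ⊗[R] TX x)

/-- The top Čech cohomology of `R` along the sequence `l`. -/
abbrev Cech (l : List R) : Type := cechMod l

/-- Modulo `l`, the module `M` is supported in `V(J)`; tested on the annihilators of single elements. -/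
def SuppMod (J : Ideal R) (l : List R) (M : Type) [AddCommGroup M] [Module R M] : Prop :=
  ∀ m : M, J ≤ (Ideal.torsionOf R M m ⊔ Ideal.ofList l).radical

section
variable {J : Ideal R} {M N P : Type} [AddCommGroup M] [Module R M] [AddCommGroup N]
  [Module R N] [AddCommGroup P] [Module R P]

lemma SuppMod.tors [IsNoetherianRing R] (h : SuppMod J [] M) : Tors J M := by
  intro m
  have := h m
  rw [Ideal.ofList_nil, sup_bot_eq] at this
  obtain ⟨n, hn⟩ := Ideal.exists_pow_le_of_le_radical_of_fg this (IsNoetherian.noetherian J)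
  exact ⟨n, fun r hr => hn hr⟩

lemma radical_cons {I : Ideal R} {x : R} {l : List R} (hx : x ∈ I.radical) :
    (I ⊔ Ideal.ofList (x :: l)).radical ≤ (I ⊔ Ideal.ofList l).radical := by
  rw [Ideal.radical_le_radical_iff, Ideal.ofList_cons]
  refine sup_le (le_sup_left.trans Ideal.le_radical) (sup_le ?_ (le_sup_right.trans Ideal.le_radical))
  rw [Ideal.span_singleton_le_iff_mem]
  exact Ideal.radical_mono le_sup_left hx

lemma SuppMod.of_tors_submodule {x : R} {l : List R} (h : SuppMod J (x :: l) M) (K : Submodule R M)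
    (hK : ∀ m ∈ K, ∃ n : ℕ, x ^ n • m = 0) : SuppMod J l K := by
  rintro ⟨m, hm⟩
  have e : Ideal.torsionOf R K ⟨m, hm⟩ = Ideal.torsionOf R M m := by
    ext r
    simp [Ideal.mem_torsionOf_iff, ← Subtype.coe_inj]
  rw [e]
  exact (h m).trans (radical_cons (hK m hm))

lemma TX.tors (x : R) (t : TX x) : ∃ n : ℕ, x ^ n • t = 0 := by
  obtain ⟨y, rfl⟩ := Submodule.mkQ_surjective _ t
  obtain ⟨⟨r, s, n, rfl⟩, hs⟩ := IsLocalization.surj (Submonoid.powers x) y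
  refine ⟨n, ?_⟩
  rw [← map_smul, Submodule.mkQ_apply, Submodule.Quotient.mk_eq_zero]
  refine ⟨r, ?_⟩
  rw [Algebra.linearMap_apply, ← hs, Algebra.smul_def, mul_comm]

lemma torsionOf_add_le (a b : M) (L : Ideal R) (ha : J ≤ (Ideal.torsionOf R M a ⊔ L).radical)
    (hb : J ≤ (Ideal.torsionOf R M b ⊔ L).radical) :
    J ≤ (Ideal.torsionOf R M (a + b) ⊔ L).radical := by
  refine (le_inf ha hb).trans ?_
  rw [← Ideal.radical_mul, Ideal.radical_le_radical_iff]
  refine le_trans ?_ Ideal.le_radical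
  rw [Ideal.mul_sup, Ideal.sup_mul]
  refine sup_le (sup_le (le_trans ?_ le_sup_left) ?_) ?_
  · rw [Ideal.mul_le]
    intro r hr s hs
    rw [Ideal.mem_torsionOf_iff] at hr hs ⊢
    have h1 : (r * s) • a = 0 := by rw [mul_comm, mul_smul, hr, smul_zero]
    have h2 : (r * s) • b = 0 := by rw [mul_smul, hs, smul_zero]
    rw [smul_add, h1, h2, add_zero]
  · exact le_trans (b := L) Ideal.mul_le_left le_sup_right
  · exact le_trans (b := L) Ideal.mul_le_right le_sup_right

lemma SuppMod.tensor {x : R} {l : List R} (h : SuppMod J (x :: l) M) : SuppMod J l (TX x ⊗[R] M) := by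
  intro z
  induction z using TensorProduct.induction_on with
  | zero =>
    have : Ideal.torsionOf R (TX x ⊗[R] M) 0 = ⊤ := by simp
    rw [this, top_sup_eq, Ideal.radical_top]; exact le_top
  | tmul t m =>
    have h1 : Ideal.torsionOf R M m ≤ Ideal.torsionOf R _ (t ⊗ₜ[R] m) := by
      intro r hr
      rw [Ideal.mem_torsionOf_iff] at hr ⊢
      rw [← TensorProduct.tmul_smul, hr, TensorProduct.tmul_zero]
    have h2 : x ∈ (Ideal.torsionOf R _ (t ⊗ₜ[R] m)).radical := by
      obtain ⟨n, hn⟩ := TX.tors x t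
      refine ⟨n, ?_⟩
      rw [Ideal.mem_torsionOf_iff, TensorProduct.smul_tmul', hn, TensorProduct.zero_tmul]
    exact ((h m).trans (Ideal.radical_mono (sup_le_sup_right h1 _))).trans (radical_cons h2)
  | add a b ha hb => exact torsionOf_add_le a b _ ha hb

variable (M) in
/-- The localization map `M → R_x ⊗ M`. -/
def locMap (x : R) : M →ₗ[R] Localization.Away x ⊗[R] M := TensorProduct.mk R (Localization.Away x) M 1

lemma locMap_ker {x : R} (m : M) (hm : m ∈ LinearMap.ker (locMap M x)) : ∃ n : ℕ, x ^ n • m = 0 := by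
  have : IsLocalizedModule (Submonoid.powers x) (TensorProduct.mk R (Localization.Away x) M 1) :=
    inferInstance
  have h0 : TensorProduct.mk R (Localization.Away x) M 1 m = TensorProduct.mk R (Localization.Away x) M 1 0 := by
    rw [map_zero]; exact hm
  obtain ⟨⟨c, n, rfl⟩, hc⟩ := (IsLocalizedModule.eq_iff_exists (Submonoid.powers x) _).1 h0
  exact ⟨n, by rw [smul_zero] at hc; exact hc⟩

lemma locMap_bij (x : R) : Function.Bijective
    (x • LinearMap.id : (Localization.Away x ⊗[R] M) →ₗ[R] Localization.Away x ⊗[R] M) := by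
  have h := IsLocalizedModule.map_units (S := Submonoid.powers x)
    (TensorProduct.mk R (Localization.Away x) M 1) ⟨x, 1, pow_one x⟩
  rw [Module.End.isUnit_iff] at h
  exact h

/-- The projection `R_x ⊗ M → (R_x / R) ⊗ M`. -/
def locProj (M : Type) [AddCommGroup M] [Module R M] (x : R) :
    Localization.Away x ⊗[R] M →ₗ[R] TX x ⊗[R] M :=
  LinearMap.rTensor M (LinearMap.range (Algebra.linearMap R (Localization.Away x))).mkQ

lemma locProj_surjective (x : R) : Function.Surjective (locProj M x) :=
  LinearMap.rTensor_surjective _ (Submodule.mkQ_surjective _)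

lemma locProj_exact (x : R) : Function.Exact (LinearMap.range (locMap M x)).subtype (locProj M x) := by
  have h := rTensor_exact M (LinearMap.exact_map_mkQ_range
    (Algebra.linearMap R (Localization.Away x))) (Submodule.mkQ_surjective _)
  intro z
  refine (h z).trans ?_
  rw [Submodule.coe_subtype, Subtype.range_coe]
  constructor
  · rintro ⟨y, rfl⟩
    refine ⟨TensorProduct.lid R M y, ?_⟩
    induction y using TensorProduct.induction_on with
    | zero => simp
    | tmul r m =>
      simp only [TensorProduct.lid_tmul, map_smul, LinearMap.rTensor_tmul, Algebra.linearMap_apply]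
      rw [locMap, TensorProduct.mk_apply, TensorProduct.smul_tmul', Algebra.smul_def, mul_one]
    | add a b ha hb => rw [map_add, map_add, ha, hb, map_add]
  · rintro ⟨m, rfl⟩
    exact ⟨1 ⊗ₜ m, by simp [locMap]⟩

/-- The long exact sequence attached to `0 → ker f → M → range f → 0`. -/
lemma LC.les_ker (J : Ideal R) (f : M →ₗ[R] N) :
    ∃ (u : ∀ i, LC J i (LinearMap.ker f) →ₗ[R] LC J i M)
      (v : ∀ i, LC J i M →ₗ[R] LC J i (LinearMap.range f))
      (δ : ∀ i, LC J i (LinearMap.range f) →ₗ[R] LC J (i + 1) (LinearMap.ker f)),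
      (∀ i, Function.Exact (u i) (v i)) ∧ (∀ i, Function.Exact (v i) (δ i)) := by
  have hs : Function.Surjective f.rangeRestrict := LinearMap.surjective_rangeRestrict f
  obtain ⟨δ, h1, h2, -⟩ := LC.les J (LinearMap.ker f).subtype f.rangeRestrict
    (Submodule.injective_subtype _) hs (by intro m; simp [Subtype.ext_iff])
  exact ⟨_, _, δ, h1, h2⟩

/-- Local cohomology of `M` vanishes above the length of a sequence cutting the support of `M` down
to `V(J)`. -/
lemma LC.vanish [IsNoetherianRing R] (l : List R) (hl : ∀ x ∈ l, x ∈ J) (M : Type)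
    [AddCommGroup M] [Module R M] (h : SuppMod J l M) (i : ℕ) (hi : l.length < i) :
    Subsingleton (LC J i M) := by
  induction l generalizing M i with
  | nil =>
    obtain ⟨i, rfl⟩ := Nat.exists_eq_succ_of_ne_zero (Nat.ne_of_gt hi)
    exact LC.subsingleton_of_tors i M h.tors
  | cons x l ih =>
    obtain ⟨i, rfl⟩ := Nat.exists_eq_succ_of_ne_zero (Nat.ne_zero_of_lt hi)
    have hl' : ∀ x ∈ l, x ∈ J := fun y hy => hl y (List.mem_cons_of_mem _ hy)
    have hxJ : x ∈ J := hl x List.mem_cons_self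
    simp only [List.length_cons, Nat.succ_eq_add_one, Nat.add_lt_add_iff_right] at hi
    have hK := ih hl' _ (h.of_tors_submodule _ (fun m hm => locMap_ker m hm)) (i+1) (by lia)
    have hC := ih hl' _ h.tensor i hi
    obtain ⟨δ, -, -, h3⟩ := LC.les J _ (locProj M x) (Submodule.injective_subtype _)
      (locProj_surjective x) (locProj_exact x)
    have hMx := exact_subsingleton (h3 i) hC (LC.subsingleton_of_bijective hxJ (locMap_bij x) _)
    obtain ⟨_, _, _, h1, -⟩ := LC.les_ker J (locMap M x)
    exact exact_subsingleton (h1 (i+1)) hK hMx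

/-- In degree `l.length`, the highest one that can be nonzero, local cohomology is the tensor product
with a fixed module. -/
lemma LC.top [IsNoetherianRing R] (l : List R) (hl : ∀ x ∈ l, x ∈ J) (M : Type)
    [AddCommGroup M] [Module R M] (h : SuppMod J l M) :
    Nonempty (LC J l.length M ≃ₗ[R] Cech l ⊗[R] M) := by
  induction l generalizing M with
  | nil => exact ⟨(LC.zeroEquiv h.tors).trans (TensorProduct.lid R M).symm⟩
  | cons x l ih =>
    have hl' : ∀ x ∈ l, x ∈ J := fun y hy => hl y (List.mem_cons_of_mem _ hy)
    have hxJ : x ∈ J := hl x List.mem_cons_self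
    have hK := LC.vanish l hl' _ (h.of_tors_submodule _ (fun m hm => locMap_ker m hm))
    obtain ⟨δ, -, h2, h3⟩ := LC.les J _ (locProj M x) (Submodule.injective_subtype _)
      (locProj_surjective x) (locProj_exact x)
    obtain ⟨u, v, δ', h1', h2'⟩ := LC.les_ker J (locMap M x)
    have hL := fun i => LC.subsingleton_of_bijective hxJ (locMap_bij (M := M) x) i
    let e1 := LinearEquiv.ofBijective _ ⟨exact_injective (h1' (l.length + 1)) (hK _ (by lia)),
      exact_surjective (h2' (l.length + 1)) (hK _ (by lia))⟩
    let e2 := LinearEquiv.ofBijective _ ⟨exact_injective (h2 l.length) (hL _),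
      exact_surjective (h3 l.length) (hL _)⟩
    obtain ⟨e3⟩ := ih hl' _ h.tensor
    exact ⟨((e1.trans e2.symm).trans e3).trans (TensorProduct.assoc R (Cech l) (TX x) M).symm⟩

end
end Solid
end

/-! ### Dimension and systems of parameters -/

noncomputable section
open CategoryTheory Opposite Limits TensorProduct
namespace Solid
variable {R : Type} [CommRing R]

/-- There is a strictly increasing chain of primes of length `n` starting at the prime `P`. -/
def HasChain : ℕ → Ideal R → Prop
  | 0, P => P.IsPrime
  | n + 1, P => P.IsPrime ∧ ∃ Q, P < Q ∧ HasChain n Q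

/-- The dimension of `R ⧸ I` is at most `n`, expressed through chains of primes containing `I`. -/
def DimLE (n : ℕ) (I : Ideal R) : Prop := ∀ k P, I ≤ P → HasChain k P → k ≤ n

lemma HasChain.isPrime {n : ℕ} {P : Ideal R} (h : HasChain n P) : P.IsPrime := by
  cases n with
  | zero => exact h
  | succ n => exact h.1

lemma hasChain_iff (n : ℕ) (P : Ideal R) : HasChain n P ↔
    ∃ s : LTSeries (PrimeSpectrum R), s.length = n ∧ s.head.asIdeal = P := by
  induction n generalizing P with
  | zero =>
    constructor
    · intro h
      exact ⟨RelSeries.singleton _ ⟨P, h⟩, rfl, rfl⟩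
    · rintro ⟨s, -, rfl⟩
      exact s.head.2
  | succ n ih =>
    constructor
    · rintro ⟨hP, Q, hPQ, hQ⟩
      obtain ⟨s, hs, rfl⟩ := (ih Q).1 hQ
      refine ⟨s.cons ⟨P, hP⟩ hPQ, ?_, ?_⟩
      · simp [hs]
      · simp
    · rintro ⟨s, hs, rfl⟩
      have h0 : s.length ≠ 0 := by omega
      refine ⟨s.head.2, (s.tail h0).head.asIdeal, ?_, (ih _).2 ⟨s.tail h0, ?_, rfl⟩⟩
      · rw [RelSeries.head_tail]
        have := s.strictMono (a := 0) (b := 1) (by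
          rw [Fin.lt_def, Fin.val_zero, Fin.val_one', Nat.mod_eq_of_lt (by omega)]; omega)
        exact this
      · simp [hs]

lemma DimLE.mono {n : ℕ} {I J : Ideal R} (h : DimLE n I) (hIJ : I ≤ J) : DimLE n J :=
  fun k P hP hc => h k P (hIJ.trans hP) hc

lemma prime_avoidance {S : Set (Ideal R)} (hS : S.Finite) (hp : ∀ q ∈ S, q.IsPrime) {I : Ideal R}
    (h : ∀ q ∈ S, ¬ I ≤ q) : ∃ x ∈ I, ∀ q ∈ S, x ∉ q := by
  by_contra! hc
  obtain ⟨q, hq, hle⟩ := (Ideal.subset_union_prime_finite hS (f := id) ⊥ ⊥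
    (fun q hq _ _ => hp q hq) (I := I)).1 (by
      intro x hx
      obtain ⟨q, h1, h2⟩ := hc x hx
      simp only [Set.mem_iUnion]
      exact ⟨q, h1, h2⟩)
  exact h q hq hle

section
variable [IsLocalRing R]
open IsLocalRing

lemma HasChain.maximal {k : ℕ} (h : HasChain k (maximalIdeal R)) : k = 0 := by
  cases k with
  | zero => rfl
  | succ k =>
    obtain ⟨-, Q, h1, h2⟩ := h
    exact absurd (le_maximalIdeal h2.isPrime.ne_top) (not_le_of_gt h1)

lemma DimLE.eq_maximal {I P : Ideal R} (h : DimLE 0 I) (hP : P.IsPrime) (hI : I ≤ P) :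
    P = maximalIdeal R := by
  by_contra hne
  have := h 1 P hI ⟨hP, maximalIdeal R, lt_of_le_of_ne (le_maximalIdeal hP.ne_top) hne,
    (inferInstance : (maximalIdeal R).IsPrime)⟩
  omega

lemma DimLE.sup {n : ℕ} {P : Ideal R} (hP : P.IsPrime) (h : DimLE (n + 1) P) {r : R} (hr : r ∉ P) :
    DimLE n (P ⊔ Ideal.span {r}) := by
  intro k Q hQ hc
  have : P < Q := lt_of_le_of_ne (le_sup_left.trans hQ) (by
    rintro rfl
    exact hr (hQ (Ideal.mem_sup_right (Ideal.mem_span_singleton_self r))))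
  have := h (k + 1) P le_rfl ⟨hP, Q, this, hc⟩
  omega

variable [IsNoetherianRing R]

/-- Existence of systems of parameters modulo `I`. -/
lemma DimLE.exists_list {n : ℕ} {I : Ideal R} (h : DimLE n I) :
    ∃ l : List R, l.length = n ∧ (∀ x ∈ l, x ∈ maximalIdeal R) ∧
      maximalIdeal R ≤ (I ⊔ Ideal.ofList l).radical := by
  induction n generalizing I with
  | zero =>
    refine ⟨[], rfl, by simp, ?_⟩
    rw [Ideal.ofList_nil, sup_bot_eq, Ideal.radical_eq_sInf]
    refine le_sInf ?_
    rintro P ⟨h1, h2⟩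
    rw [h.eq_maximal h2 h1]
  | succ n ih =>
    have hfin : {q ∈ I.minimalPrimes | q ≠ maximalIdeal R}.Finite :=
      (Ideal.finite_minimalPrimes_of_isNoetherianRing R I).subset fun q hq => hq.1
    obtain ⟨x, hx, hx'⟩ : ∃ x ∈ maximalIdeal R,
        ∀ q ∈ I.minimalPrimes, q ≠ maximalIdeal R → x ∉ q := by
      obtain ⟨x, hx, hx'⟩ := prime_avoidance hfin (fun q hq => hq.1.1.1) (I := maximalIdeal R)
        (fun q hq hle => hq.2 (le_antisymm (le_maximalIdeal hq.1.1.1.ne_top) hle))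
      exact ⟨x, hx, fun q h1 h2 => hx' q ⟨h1, h2⟩⟩
    have hD : DimLE n (I ⊔ Ideal.span {x}) := by
      intro k P hP hc
      have := hc.isPrime
      obtain ⟨q, hq, hqP⟩ := Ideal.exists_minimalPrimes_le (le_sup_left.trans hP)
      by_cases hqm : q = maximalIdeal R
      · have : P = maximalIdeal R := le_antisymm (le_maximalIdeal this.ne_top) (hqm ▸ hqP)
        subst this
        rw [hc.maximal]
        omega
      · have hlt : q < P := lt_of_le_of_ne hqP (by
          rintro rfl
          exact hx' q hq hqm (hP (Ideal.mem_sup_right (Ideal.mem_span_singleton_self x))))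
        have := h (k + 1) q hq.1.2 ⟨hq.1.1, P, hlt, hc⟩
        omega
    obtain ⟨l, h1, h2, h3⟩ := ih hD
    refine ⟨x :: l, by simp [h1], ?_, ?_⟩
    · intro y hy
      rcases List.mem_cons.1 hy with rfl | hy
      · exact hx
      · exact h2 y hy
    · rwa [Ideal.ofList_cons, ← sup_assoc]

section
variable {M : Type} [AddCommGroup M] [Module R M]

lemma SuppMod.of_killed {J I : Ideal R} {l : List R} (h : J ≤ (I ⊔ Ideal.ofList l).radical)
    (hM : ∀ r ∈ I, ∀ x : M, r • x = 0) : SuppMod J l M := by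
  intro x
  refine h.trans (Ideal.radical_mono (sup_le_sup_right ?_ _))
  intro r hr
  exact hM r hr x

lemma LC.vanish_dim {n : ℕ} {I : Ideal R} (h : DimLE n I) (hM : ∀ r ∈ I, ∀ x : M, r • x = 0)
    {i : ℕ} (hi : n < i) : Subsingleton (LC (maximalIdeal R) i M) := by
  obtain ⟨l, h1, h2, h3⟩ := h.exists_list
  exact LC.vanish l h2 M (SuppMod.of_killed h3 hM) i (h1 ▸ hi)

lemma LC.subsingleton_of_subsingleton (J : Ideal R) (i : ℕ) [Subsingleton M] :
    Subsingleton (LC J i M) := by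
  refine ⟨fun a b => ?_⟩
  have e : (LinearMap.id : M →ₗ[R] M) = 0 := by
    ext x
    exact Subsingleton.elim _ _
  have h : ∀ z : LC J i M, z = 0 := fun z => by
    have h1 : LC.map J i (LinearMap.id : M →ₗ[R] M) z = z := by rw [LC.map_id]
    rw [← h1, e]
    simp [LC.map_zero_hom]
  rw [h a, h b]

/-- Modules over `R ⧸ P` killed by an element outside `P` have no cohomology already in degree
`dim R ⧸ P`, since their support is smaller. -/
lemma LC.vanish_dim_prime {n : ℕ} {P : Ideal R} (hP : P.IsPrime) (h : DimLE n P) {r : R}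
    (hr : r ∉ P) (hM : ∀ r ∈ P, ∀ x : M, r • x = 0) (hrM : ∀ x : M, r • x = 0)
    {i : ℕ} (hi : n ≤ i) : Subsingleton (LC (maximalIdeal R) i M) := by
  cases n with
  | zero =>
    have hP := h.eq_maximal hP le_rfl
    subst hP
    rw [mem_maximalIdeal, mem_nonunits_iff, not_not] at hr
    have : Subsingleton M := subsingleton_of_forall_eq 0 fun x => by
      rw [← hr.smul_eq_zero]; exact hrM x
    exact LC.subsingleton_of_subsingleton _ _
  | succ n =>
    refine LC.vanish_dim (h.sup hP hr) ?_ hi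
    intro s hs x
    obtain ⟨a, ha, b, hb, rfl⟩ := Submodule.mem_sup.1 hs
    obtain ⟨c, rfl⟩ := Ideal.mem_span_singleton'.1 hb
    rw [add_smul, hM a ha, mul_smul, hrM, smul_zero, add_zero]

end
end
end Solid
end

/-! ### Artinianness of local cohomology -/

noncomputable section
open CategoryTheory Opposite Limits TensorProduct
namespace Solid
variable {R : Type} [CommRing R]

/-- Melkersson's criterion: an `x`-power torsion module in which the kernel of multiplication by `x`
is Artinian is itself Artinian. A descending chain `L j` is controlled by the submodules
`a j k = x ^ k L j ∩ ker x`, which become constant in `j` uniformly in `k`. -/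
lemma isArtinian_of_ker {N : Type} [AddCommGroup N] [Module R N] (x : R)
    (hx : ∀ u : N, ∃ t : ℕ, x ^ t • u = 0)
    (hK : IsArtinian R (LinearMap.ker (x • LinearMap.id : N →ₗ[R] N))) : IsArtinian R N := by
  rw [← monotone_stabilizes_iff_artinian]
  intro L'
  let L : ℕ → Submodule R N := fun j => OrderDual.ofDual (L' j)
  have hL : ∀ i j, i ≤ j → L j ≤ L i := fun i j hij => L'.2 hij
  set K := LinearMap.ker (x • LinearMap.id : N →ₗ[R] N) with hKdef
  have memK : ∀ v : N, v ∈ K ↔ x • v = 0 := fun v => by simp [hKdef]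
  let a : ℕ → ℕ → Submodule R K := fun j k =>
    ((L j).map (x ^ k • LinearMap.id : N →ₗ[R] N)).comap K.subtype
  have mema : ∀ j k (v : K), v ∈ a j k ↔ ∃ u ∈ L j, x ^ k • u = (v : N) := fun j k v => by
    simp [a, Submodule.mem_map]
  have ha1 : ∀ i j k, i ≤ j → a j k ≤ a i k := by
    intro i j k hij v hv
    rw [mema] at hv ⊢
    obtain ⟨u, hu, h⟩ := hv
    exact ⟨u, hL i j hij hu, h⟩
  have ha2 : ∀ j k l, k ≤ l → a j l ≤ a j k := by
    intro j k l hkl v hv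
    rw [mema] at hv ⊢
    obtain ⟨u, hu, h⟩ := hv
    refine ⟨x ^ (l - k) • u, (L j).smul_mem _ hu, ?_⟩
    rw [smul_smul, ← pow_add, Nat.add_sub_cancel' hkl, h]
  obtain ⟨n0, hn0⟩ := monotone_stabilizes_iff_artinian.2 hK
    ⟨fun n => OrderDual.toDual (a n n), fun i j hij => (ha1 i j j hij).trans (ha2 i i j hij)⟩
  have hn0 : ∀ m, n0 ≤ m → a n0 n0 = a m m := fun m hm => OrderDual.toDual.injective (hn0 m hm)
  have hk : ∀ k, ∃ n, ∀ m, n ≤ m → a n k = a m k := fun k => by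
    obtain ⟨n, hn⟩ := monotone_stabilizes_iff_artinian.2 hK
      ⟨fun n => OrderDual.toDual (a n k), fun i j hij => ha1 i j k hij⟩
    exact ⟨n, fun m hm => OrderDual.toDual.injective (hn m hm)⟩
  choose f hf using hk
  let n1 := n0 + ∑ k ∈ Finset.range n0, f k
  have key : ∀ j, n1 ≤ j → ∀ k, a n1 k ≤ a j k := by
    intro j hj k
    rcases lt_or_ge k n0 with hkn | hkn
    · have : f k ≤ n1 := (Finset.single_le_sum (f := f) (fun _ _ => Nat.zero_le _)
        (Finset.mem_range.2 hkn)).trans (Nat.le_add_left _ _)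
      rw [← hf k n1 this, hf k j (this.trans hj)]
    · calc a n1 k ≤ a n0 k := ha1 _ _ _ (Nat.le_add_right _ _)
        _ ≤ a n0 n0 := ha2 _ _ _ hkn
        _ = a (j + k) (j + k) := hn0 _ (by omega)
        _ ≤ a j (j + k) := ha1 _ _ _ (by omega)
        _ ≤ a j k := ha2 _ _ _ (by omega)
  refine ⟨n1, fun j hj => ?_⟩
  suffices h : L n1 ≤ L j from
    OrderDual.ofDual.injective (le_antisymm h (hL n1 j hj))
  have main : ∀ t : ℕ, ∀ u ∈ L n1, x ^ t • u = 0 → u ∈ L j := by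
    intro t
    induction t with
    | zero =>
      intro u _ h
      rw [pow_zero, one_smul] at h
      rw [h]
      exact zero_mem _
    | succ t ih =>
      intro u hu h
      have hv : x ^ t • u ∈ K := by rw [memK, smul_smul, ← pow_succ', h]
      have := key j hj t ((mema n1 t ⟨_, hv⟩).2 ⟨u, hu, rfl⟩)
      obtain ⟨w, hw, hw'⟩ := (mema j t _).1 this
      have := ih (u - w) (sub_mem hu (hL n1 j hj hw)) (by rw [smul_sub, hw']; simp)
      simpa using add_mem this hw
  intro u hu
  obtain ⟨t, ht⟩ := hx u
  exact main t u hu ht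

section
variable [IsLocalRing R] [IsNoetherianRing R]
open IsLocalRing

lemma LC.nonempty_equiv (J : Ideal R) (i : ℕ) {M N : Type} [AddCommGroup M] [Module R M]
    [AddCommGroup N] [Module R N] (e : M ≃ₗ[R] N) : Nonempty (LC J i M ≃ₗ[R] LC J i N) := by
  refine ⟨LinearEquiv.ofLinearMap (LC.map J i e.toLinearMap) (LC.map J i e.symm.toLinearMap) ?_ ?_⟩
  · ext z
    simp only [LinearMap.comp_apply, LinearMap.id_apply]
    rw [← LC.map_comp, LinearEquiv.comp_symm, LC.map_id]
  · ext z
    simp only [LinearMap.comp_apply, LinearMap.id_apply]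
    rw [← LC.map_comp, LinearEquiv.symm_comp, LC.map_id]

/-- `x` acts injectively on `R ⧸ P` if `x ∉ P`. -/
lemma smul_injective_quot {P : Ideal R} (hP : P.IsPrime) {x : R} (hx : x ∉ P) :
    Function.Injective (x • LinearMap.id : (R ⧸ P) →ₗ[R] (R ⧸ P)) := by
  rw [← LinearMap.ker_eq_bot, LinearMap.ker_eq_bot']
  intro z hz
  obtain ⟨r, rfl⟩ := Ideal.Quotient.mk_surjective z
  have : (Ideal.Quotient.mk P) (x * r) = 0 := by
    rw [map_mul]; exact hz
  rw [Ideal.Quotient.eq_zero_iff_mem] at this ⊢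
  exact (hP.mem_or_mem this).resolve_left hx

/-- The long exact sequence for multiplication by `x` on a module without `x`-torsion. -/
lemma LC.les_mul (J : Ideal R) {M : Type} [AddCommGroup M] [Module R M] {x : R}
    (hx : Function.Injective (x • LinearMap.id : M →ₗ[R] M)) :
    ∃ δ : ∀ i, LC J i (M ⧸ LinearMap.range (x • LinearMap.id : M →ₗ[R] M)) →ₗ[R] LC J (i + 1) M,
      (∀ i, Function.Exact (LC.map J i (x • LinearMap.id : M →ₗ[R] M))
        (LC.map J i (Submodule.mkQ (LinearMap.range (x • LinearMap.id : M →ₗ[R] M))))) ∧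
      (∀ i, Function.Exact (δ i) (LC.map J (i + 1) (x • LinearMap.id : M →ₗ[R] M))) := by
  obtain ⟨δ, h1, h2, h3⟩ := LC.les J (x • LinearMap.id : M →ₗ[R] M)
    (Submodule.mkQ (LinearMap.range (x • LinearMap.id : M →ₗ[R] M))) hx
    (Submodule.mkQ_surjective _) (LinearMap.exact_iff.2 (by simp))
  exact ⟨δ, h1, h3⟩

lemma tors_quot_maximal : Tors (maximalIdeal R) (R ⧸ maximalIdeal R) := by
  intro z
  refine ⟨1, fun r hr => ?_⟩
  obtain ⟨s, rfl⟩ := Ideal.Quotient.mk_surjective z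
  have : (Ideal.Quotient.mk (maximalIdeal R)) (r * s) = 0 := by
    rw [Ideal.Quotient.eq_zero_iff_mem]
    exact Ideal.mul_mem_right _ _ (by simpa using hr)
  rw [map_mul] at this
  exact this

/-- Noetherian induction on `P`: for `x ∉ P` the kernel of `x` on `H^i(R ⧸ P)` is a quotient of
`H^{i-1}` of `R ⧸ (P + (x))`, which is Artinian by a filtration with quotients `R ⧸ Q`, `Q > P`. -/
lemma LC.artinian_quot (P : Ideal R) (hP : P.IsPrime) (i : ℕ) :
    IsArtinian R (LC (maximalIdeal R) i (R ⧸ P)) := by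
  induction P using IsNoetherian.induction generalizing i with
  | hgt P ih =>
  by_cases hPm : P = maximalIdeal R
  · subst hPm
    cases i with
    | zero =>
      have : IsArtinian R (R ⧸ maximalIdeal R) := by
        have : IsSimpleModule R (R ⧸ maximalIdeal R) :=
          isSimpleModule_iff_isCoatom.2 (maximalIdeal.isMaximal R).out
        infer_instance
      exact isArtinian_of_linearEquiv (LC.zeroEquiv tors_quot_maximal).symm
    | succ i =>
      have := LC.subsingleton_of_tors i _ (tors_quot_maximal (R := R))
      infer_instance
  · obtain ⟨x, hxm, hxP⟩ : ∃ x ∈ maximalIdeal R, x ∉ P := by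
      by_contra! hc
      exact hPm (le_antisymm (le_maximalIdeal hP.ne_top) hc)
    refine isArtinian_of_ker x (fun u => ?_) ?_
    · obtain ⟨t, ht⟩ := LC.torsion u
      exact ⟨t, ht _ (Ideal.pow_mem_pow hxm t)⟩
    · have hinj := smul_injective_quot hP hxP
      obtain ⟨δ, h1, h3⟩ := LC.les_mul (maximalIdeal R) hinj
      have e : ∀ i, (x • LinearMap.id : LC (maximalIdeal R) i (R ⧸ P) →ₗ[R] _) =
          LC.map (maximalIdeal R) i (x • LinearMap.id) := fun i => by
        ext z
        rw [LC.map_smul_id]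
        rfl
      rw [e]
      cases i with
      | zero =>
        have := LC.map_zero_injective (J := maximalIdeal R) _ hinj
        rw [LinearMap.ker_eq_bot.2 this]
        infer_instance
      | succ i =>
        rw [(LinearMap.exact_iff.1 (h3 i))]
        have main : ∀ (N : Type) [AddCommGroup N] [Module R N] [Module.Finite R N],
            (∀ r ∈ P ⊔ Ideal.span {x}, ∀ z : N, r • z = 0) →
              ∀ i, IsArtinian R (LC (maximalIdeal R) i N) := by
          intro N _ _ hfin
          induction hfin using IsNoetherianRing.induction_on_isQuotientEquivQuotientPrime R with
          | subsingleton N =>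
            intro _ i
            have := LC.subsingleton_of_subsingleton (M := N) (maximalIdeal R) i
            infer_instance
          | quotient N p e =>
            intro h i
            obtain ⟨e'⟩ := LC.nonempty_equiv (maximalIdeal R) i e
            have hle : P ⊔ Ideal.span {x} ≤ p.asIdeal := by
              intro r hr
              have := h r hr (e.symm 1)
              rw [← map_smul, LinearEquiv.map_eq_zero_iff] at this
              rw [← Ideal.Quotient.eq_zero_iff_mem, ← mul_one r, map_mul]
              exact this
            have := ih p.asIdeal (lt_of_le_of_ne (le_sup_left.trans hle) (by
              rintro rfl
              exact hxP (hle (Ideal.mem_sup_right (Ideal.mem_span_singleton_self x))))) p.2 i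
            exact isArtinian_of_linearEquiv e'.symm
          | exact N₁ N₂ N₃ f g hf hg hfg h1 h3 =>
            intro h i
            have k1 := h1 (fun r hr z => hf (by rw [map_smul, h r hr, map_zero])) i
            have k3 := h3 (fun r hr z => by
              obtain ⟨y, rfl⟩ := hg z
              rw [← map_smul, h r hr, map_zero]) i
            obtain ⟨δ, g1, -⟩ := LC.les (maximalIdeal R) f g hf hg hfg
            exact isArtinian_of_range_eq_ker _ _ (LinearMap.exact_iff.1 (g1 i)).symm
        have := main ((R ⧸ P) ⧸ LinearMap.range (x • LinearMap.id : (R ⧸ P) →ₗ[R] (R ⧸ P))) (by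
          intro r hr z
          obtain ⟨z, rfl⟩ := Submodule.mkQ_surjective _ z
          obtain ⟨z, rfl⟩ := Ideal.Quotient.mk_surjective z
          obtain ⟨a, ha, b, hb, rfl⟩ := Submodule.mem_sup.1 hr
          obtain ⟨c, rfl⟩ := Ideal.mem_span_singleton'.1 hb
          rw [← map_smul, Submodule.mkQ_apply, Submodule.Quotient.mk_eq_zero]
          refine ⟨Ideal.Quotient.mk P (c * z), ?_⟩
          change Ideal.Quotient.mk P (x * (c * z)) = Ideal.Quotient.mk P ((a + c * x) * z)
          rw [Ideal.Quotient.mk_eq_mk_iff_sub_mem]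
          have : x * (c * z) - (a + c * x) * z = -(a * z) := by ring
          rw [this]
          exact neg_mem (Ideal.mul_mem_right _ _ ha)) i
        exact isArtinian_of_surjective _ _ (δ i).surjective_rangeRestrict
end
end Solid
end

/-! ### Non-vanishing of top local cohomology -/

noncomputable section
open CategoryTheory Opposite Limits TensorProduct
namespace Solid
variable {R : Type} [CommRing R]

/-- Krull's principal ideal theorem in `R ⧸ P`: no prime lies strictly between `P` and a minimal
prime of `P ⊔ (z)`. -/
lemma not_between [IsNoetherianRing R] {P q Q : Ideal R} (hP : P.IsPrime) (hq : q.IsPrime) {z : R}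
    (hQ : Q ∈ (P ⊔ Ideal.span {z}).minimalPrimes) (h1 : P < q) (h2 : q < Q) : False := by
  have hle := Ideal.map_height_le_one_of_mem_minimalPrimes hQ
  have hQ' := hQ.1.1
  have hsurj := Ideal.Quotient.mk_surjective (I := P)
  have hcom : ∀ I : Ideal R, P ≤ I → (I.map (Ideal.Quotient.mk P)).comap (Ideal.Quotient.mk P) = I :=
    fun I hI => by
      rw [Ideal.comap_map_of_surjective _ hsurj, ← RingHom.ker_eq_comap_bot, Ideal.mk_ker]
      exact sup_eq_left.2 hI
  have p1 : (q.map (Ideal.Quotient.mk P)).IsPrime :=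
    Ideal.map_isPrime_of_surjective hsurj (by simpa using h1.le)
  have p2 : (Q.map (Ideal.Quotient.mk P)).IsPrime :=
    Ideal.map_isPrime_of_surjective hsurj (by simpa using (h1.trans h2).le)
  have l2 : q.map (Ideal.Quotient.mk P) < Q.map (Ideal.Quotient.mk P) := by
    refine lt_of_le_of_ne (Ideal.map_mono h2.le) fun he => h2.ne ?_
    rw [← hcom q h1.le, he, hcom Q (h1.trans h2).le]
  have l1 : (⊥ : Ideal (R ⧸ P)) < q.map (Ideal.Quotient.mk P) := by
    refine bot_lt_iff_ne_bot.2 fun he => h1.ne ?_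
    rw [← hcom q h1.le, he, ← RingHom.ker_eq_comap_bot, Ideal.mk_ker]
  have : (⊥ : Ideal (R ⧸ P)).IsPrime := Ideal.isPrime_bot
  have a1 := Ideal.height_add_one_le_of_lt_of_isPrime l1
  have a2 := Ideal.height_add_one_le_of_lt_of_isPrime l2
  have : (0 : ℕ∞) + 1 + 1 ≤ 1 := by
    refine le_trans ?_ hle
    refine le_trans ?_ a2
    gcongr
    refine le_trans ?_ a1
    gcongr
    exact zero_le
  exact absurd this (by decide)

/-- The first step of a chain of length at least two can be chosen to avoid a given `y ∉ P`. If the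
chain starts with `P < P1 < P2`, take a prime below `P2` which is minimal over `P + (z)`, where `z ∈ P2`
lies neither in `P` nor in any minimal prime of `P + (y)` that does not contain `P2`. -/
lemma HasChain.exists_prime [IsNoetherianRing R] {n : ℕ} {P : Ideal R} (h : HasChain (n + 2) P)
    {y : R} (hy : y ∉ P) : ∃ Q, P < Q ∧ HasChain (n + 1) Q ∧ y ∉ Q := by
  obtain ⟨hP, P1, hPP1, hP1, P2, hP12, hc⟩ := h
  have hP2 := hc.isPrime
  let S : Set (Ideal R) := insert P {q ∈ (P ⊔ Ideal.span {y}).minimalPrimes | ¬ P2 ≤ q}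
  have hS : S.Finite := ((Ideal.finite_minimalPrimes_of_isNoetherianRing R _).subset
    fun q hq => hq.1).insert P
  obtain ⟨z, hz, hzS⟩ := prime_avoidance hS (by
    rintro q (rfl | hq)
    · exact hP
    · exact hq.1.1.1) (I := P2) (by
    rintro q (rfl | hq)
    · exact not_le_of_gt (hPP1.trans hP12)
    · exact hq.2)
  have hzP : z ∉ P := hzS P (Set.mem_insert _ _)
  obtain ⟨Q, hQ, hQP2⟩ := Ideal.exists_minimalPrimes_le (I := P ⊔ Ideal.span {z}) (J := P2)
    (sup_le (hPP1.trans hP12).le ((Ideal.span_singleton_le_iff_mem _).2 hz))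
  have hzQ : z ∈ Q := hQ.1.2 (Ideal.mem_sup_right (Ideal.mem_span_singleton_self z))
  have hPQ : P < Q := lt_of_le_of_ne (le_sup_left.trans hQ.1.2) (by
    rintro rfl
    exact hzP hzQ)
  have hQP2' : Q < P2 := lt_of_le_of_ne hQP2 (by
    rintro rfl
    exact not_between hP hP1 hQ hPP1 hP12)
  refine ⟨Q, hPQ, ⟨hQ.1.1, P2, hQP2', hc⟩, fun hyQ => ?_⟩
  have := hQ.1.1
  obtain ⟨q, hq, hqQ⟩ := Ideal.exists_minimalPrimes_le (I := P ⊔ Ideal.span {y}) (J := Q)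
    (sup_le hPQ.le ((Ideal.span_singleton_le_iff_mem _).2 hyQ))
  have hyq : y ∈ q := hq.1.2 (Ideal.mem_sup_right (Ideal.mem_span_singleton_self y))
  have hPq : P < q := lt_of_le_of_ne (le_sup_left.trans hq.1.2) (by
    rintro rfl
    exact hy hyq)
  have hzq : z ∉ q := hzS q (Set.mem_insert_of_mem _
    ⟨hq, not_le_of_gt (lt_of_le_of_lt hqQ hQP2')⟩)
  exact not_between hP hq.1.1 hQ hPq (lt_of_le_of_ne hqQ (by
    rintro rfl
    exact hzq hzQ))

lemma DimLE.of_lt {n : ℕ} {P Q : Ideal R} (hP : P.IsPrime) (h : DimLE (n + 1) P) (hPQ : P < Q) :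
    DimLE n Q := by
  intro k Q' hQ hc
  have := h (k + 1) P le_rfl ⟨hP, Q', lt_of_lt_of_le hPQ hQ, hc⟩
  omega

section
variable [IsLocalRing R] [IsNoetherianRing R]
open IsLocalRing

lemma quot_killed {P : Ideal R} {r : R} (hr : r ∈ P) (x : R ⧸ P) : r • x = 0 := by
  obtain ⟨s, rfl⟩ := Ideal.Quotient.mk_surjective x
  have : (Ideal.Quotient.mk P) (r * s) = 0 := by
    rw [Ideal.Quotient.eq_zero_iff_mem]
    exact Ideal.mul_mem_right _ _ hr
  rw [map_mul] at this
  exact this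

/-- In the top degree, vanishing for `R ⧸ P` propagates to all modules killed by `P`, by right
exactness. -/
lemma LC.subsingleton_of_quot {n : ℕ} {P : Ideal R} (h : DimLE n P)
    (h0 : Subsingleton (LC (maximalIdeal R) n (R ⧸ P))) (M : Type) [AddCommGroup M] [Module R M]
    (hM : ∀ r ∈ P, ∀ x : M, r • x = 0) : Subsingleton (LC (maximalIdeal R) n M) := by
  obtain ⟨l, rfl, h2, h3⟩ := h.exists_list
  obtain ⟨e⟩ := LC.top l h2 (R ⧸ P) (SuppMod.of_killed h3 fun r hr x => quot_killed hr x)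
  obtain ⟨e'⟩ := LC.top l h2 M (SuppMod.of_killed h3 hM)
  have h1 : Subsingleton (Cech l ⊗[R] (R ⧸ P)) := e.symm.toEquiv.subsingleton
  have : Subsingleton (Cech l ⊗[R] M) := by
    refine subsingleton_of_forall_eq 0 fun w => ?_
    induction w with
    | zero => rfl
    | add a b ha hb => rw [ha, hb, add_zero]
    | tmul c x =>
      let f : (R ⧸ P) →ₗ[R] M := Submodule.liftQ P (LinearMap.toSpanSingleton R M x) (by
        intro r hr
        simpa using hM r hr x)
      have hf : f (Submodule.Quotient.mk 1) = x := by
        simp only [f, Submodule.liftQ_apply]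
        simp
      rw [← hf, ← LinearMap.lTensor_tmul, Subsingleton.elim (c ⊗ₜ[R] _) 0, map_zero]
  exact e'.toEquiv.subsingleton

lemma LC.map_quot_surjective {n : ℕ} {P Q : Ideal R} (h : DimLE (n + 1) P)
    (h0 : Subsingleton (LC (maximalIdeal R) (n + 1) (R ⧸ P))) (hPQ : P ≤ Q) :
    ∃ f : LC (maximalIdeal R) n (R ⧸ P) →ₗ[R] LC (maximalIdeal R) n (R ⧸ Q),
      Function.Surjective f := by
  let g : (R ⧸ P) →ₗ[R] (R ⧸ Q) := Submodule.factor hPQ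
  obtain ⟨δ, -, h2, -⟩ := LC.les (maximalIdeal R) (LinearMap.ker g).subtype g
    (Submodule.subtype_injective _) (Submodule.factor_surjective hPQ)
    (LinearMap.exact_iff.2 (by simp))
  refine ⟨LC.map _ n g, exact_surjective (h2 n) (LC.subsingleton_of_quot h h0 _ ?_)⟩
  rintro r hr ⟨x, hx⟩
  exact Subtype.ext (quot_killed hr x)

/-- An element killing `M` kills its local cohomology. -/
lemma LC.smul_eq_zero {J : Ideal R} {i : ℕ} {M : Type} [AddCommGroup M] [Module R M] {r : R}
    (h : ∀ x : M, r • x = 0) (z : LC J i M) : r • z = 0 := by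
  have e : (r • LinearMap.id : M →ₗ[R] M) = 0 := by
    ext x
    exact h x
  rw [← LC.map_smul_id, e, LC.map_zero_hom]

/-- Grothendieck's non-vanishing theorem for `R ⧸ P`. If the top cohomology of `R ⧸ P` vanished, then
`H^{n-1}(R ⧸ P)` would surject onto `H^{n-1}(R ⧸ Q)` for all `Q` above `P`. As `H^{n-1}(R ⧸ P)` is
Artinian, some `y ∉ P` satisfies `y z H^{n-1}(R ⧸ P) = y H^{n-1}(R ⧸ P)` for all `z ∉ P`; for `Q`
of coheight `n - 1` avoiding `y`, the module `H^{n-1}(R ⧸ Q)` is then killed by `y` and `y`-divisible,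
hence zero, contradicting the inductive hypothesis. -/
lemma LC.nontrivial_quot (n : ℕ) (P : Ideal R) (hc : HasChain n P) (hD : DimLE n P) :
    Nontrivial (LC (maximalIdeal R) n (R ⧸ P)) := by
  induction n generalizing P with
  | zero =>
    have := hD.eq_maximal hc le_rfl
    subst this
    have : Nontrivial (R ⧸ maximalIdeal R) := Ideal.Quotient.nontrivial_iff.2 hc.isPrime.ne_top
    exact (LC.zeroEquiv tors_quot_maximal).toEquiv.nontrivial
  | succ n ih =>
    rw [← not_subsingleton_iff_nontrivial]
    intro h0
    have hP := hc.isPrime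
    cases n with
    | zero =>
      obtain ⟨-, Q, hPQ, hQ⟩ := hc
      obtain ⟨f, hf⟩ := LC.map_quot_surjective hD h0 hPQ.le
      have hn := ih Q hQ (hD.of_lt hP hPQ)
      have hQ' := (hD.of_lt hP hPQ).eq_maximal hQ le_rfl
      obtain ⟨z, hzQ, hzP⟩ := SetLike.exists_of_lt hPQ
      rw [hQ'] at hzQ
      have hz := LC.map_zero_injective (J := maximalIdeal R) _ (smul_injective_quot hP hzP)
      have : Subsingleton (LC (maximalIdeal R) 0 (R ⧸ P)) := by
        refine subsingleton_of_forall_eq 0 fun u => ?_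
        obtain ⟨t, ht⟩ := LC.torsion u
        replace ht := ht _ (Ideal.pow_mem_pow hzQ t)
        induction t with
        | zero => simpa using ht
        | succ t iht =>
          refine iht ?_
          apply hz
          rw [LC.map_smul_id, smul_smul, ← pow_succ', ht, map_zero]
      exact not_subsingleton _ hf.subsingleton
    | succ n =>
      have hart := LC.artinian_quot P hP (n + 1)
      obtain ⟨_, ⟨y, hyP, rfl⟩, hmin⟩ := IsArtinian.set_has_minimal (R := R)
        (M := LC (maximalIdeal R) (n + 1) (R ⧸ P))
        {L | ∃ y, y ∉ P ∧ L = LinearMap.range (y • LinearMap.id)}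
        ⟨_, 1, (Ideal.ne_top_iff_one P).1 hP.ne_top, rfl⟩
      obtain ⟨Q, hPQ, hQ, hyQ⟩ := hc.exists_prime hyP
      obtain ⟨f, hf⟩ := LC.map_quot_surjective hD h0 hPQ.le
      have hDQ := hD.of_lt hP hPQ
      have hn := ih Q hQ hDQ
      obtain ⟨z, hzQ, hzP⟩ := SetLike.exists_of_lt hPQ
      have hy0 : ∀ w : LC (maximalIdeal R) (n + 1) (R ⧸ Q), y • w = 0 := by
        intro w
        obtain ⟨u, rfl⟩ := hf w
        have hyz : y * z ∉ P := fun h => (hP.mem_or_mem h).elim hyP hzP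
        have hle : LinearMap.range ((y * z) • LinearMap.id :
            LC (maximalIdeal R) (n + 1) (R ⧸ P) →ₗ[R] _) ≤ LinearMap.range (y • LinearMap.id) := by
          rintro _ ⟨u, rfl⟩
          exact ⟨z • u, by simp [smul_smul, mul_comm]⟩
        have := eq_of_le_of_not_lt hle (hmin _ ⟨y * z, hyz, rfl⟩)
        have hmem : y • u ∈ LinearMap.range (y • LinearMap.id :
            LC (maximalIdeal R) (n + 1) (R ⧸ P) →ₗ[R] _) := ⟨u, rfl⟩
        rw [← this] at hmem
        obtain ⟨v, hv⟩ := hmem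
        rw [← map_smul, ← hv]
        simp only [LinearMap.smul_apply, LinearMap.id_apply, map_smul, mul_smul]
        rw [LC.smul_eq_zero (quot_killed hzQ), smul_zero]
      obtain ⟨δ, h1, -⟩ := LC.les_mul (maximalIdeal R) (smul_injective_quot hQ.isPrime hyQ)
      have hsurj := exact_surjective (h1 (n + 1)) (LC.vanish_dim_prime hQ.isPrime hDQ hyQ
        (fun r hr x => by
          obtain ⟨x, rfl⟩ := Submodule.mkQ_surjective _ x
          rw [← map_smul, quot_killed hr, map_zero])
        (fun x => by
          obtain ⟨x, rfl⟩ := Submodule.mkQ_surjective _ x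
          rw [← map_smul, Submodule.mkQ_apply, Submodule.Quotient.mk_eq_zero]
          exact ⟨x, rfl⟩) le_rfl)
      refine not_subsingleton (LC (maximalIdeal R) (n + 1) (R ⧸ Q))
        (subsingleton_of_forall_eq 0 fun w => ?_)
      obtain ⟨u, rfl⟩ := hsurj w
      rw [LC.map_smul_id, hy0]

/-- The top local cohomology `T` of a local domain `R` of dimension `d` is a nonzero Artinian
module, killed by tensoring with modules of bounded torsion, and it computes `H^d_m(M)` as `T ⊗ M`. -/
lemma exists_top [IsDomain R] (d : ℕ) (hd : ringKrullDim R = d) :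
    ∃ (T : Type) (_ : AddCommGroup T) (_ : Module R T), Nontrivial T ∧ IsArtinian R T ∧
      Tors (maximalIdeal R) T ∧
      (∀ (r : R), r ≠ 0 → ∀ (M : Type) [AddCommGroup M] [Module R M], (∀ x : M, r • x = 0) →
        Subsingleton (T ⊗[R] M)) ∧
      ∀ (M : Type) [AddCommGroup M] [Module R M],
        Nonempty (LC (maximalIdeal R) d M ≃ₗ[R] T ⊗[R] M) := by
  have hD : DimLE d (⊥ : Ideal R) := by
    intro k P _ hc
    obtain ⟨s, rfl, -⟩ := (hasChain_iff k P).1 hc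
    have h1 : (s.length : WithBot ℕ∞) ≤ d := hd ▸ Order.LTSeries.length_le_krullDim s
    exact_mod_cast h1
  have hbot : (⊥ : Ideal R).IsPrime := Ideal.isPrime_bot
  have hc : HasChain d (⊥ : Ideal R) := by
    obtain ⟨s, hs⟩ := Order.le_krullDim_iff.1 (show (d : WithBot ℕ∞) ≤ Order.krullDim
      (PrimeSpectrum R) from hd.ge)
    have h := (hasChain_iff d s.head.asIdeal).2 ⟨s, hs, rfl⟩
    by_cases h0 : s.head.asIdeal = ⊥
    · rwa [h0] at h
    · have := hD (d + 1) ⊥ le_rfl ⟨hbot, _, bot_lt_iff_ne_bot.2 h0, h⟩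
      omega
  have hnt := LC.nontrivial_quot d ⊥ hc hD
  have hart := LC.artinian_quot (⊥ : Ideal R) hbot d
  obtain ⟨l, rfl, h2, h3⟩ := hD.exists_list
  have hk : ∀ (M : Type) [AddCommGroup M] [Module R M], ∀ r ∈ (⊥ : Ideal R), ∀ x : M, r • x = 0 := by
    intro M _ _ r hr x
    rw [(Submodule.mem_bot R).1 hr, zero_smul]
  have htop := fun (M : Type) [AddCommGroup M] [Module R M] =>
    LC.top l h2 M (SuppMod.of_killed h3 (hk M))
  obtain ⟨e⟩ := htop R
  obtain ⟨e'⟩ := LC.nonempty_equiv (maximalIdeal R) l.length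
    (Submodule.quotEquivOfEqBot (⊥ : Ideal R) rfl)
  let e2 := (e'.trans e).trans (TensorProduct.rid R (Cech l))
  refine ⟨Cech l, inferInstance, inferInstance, e2.symm.toEquiv.nontrivial,
    isArtinian_of_linearEquiv e2, (LC.tors l.length).of_surjective e2.toLinearMap e2.surjective,
    ?_, htop⟩
  intro r hr M _ _ hM
  obtain ⟨e⟩ := htop M
  have := LC.vanish_dim_prime hbot hD (M := M) (r := r) (by simpa using hr) (hk M) hM le_rfl
  exact e.symm.toEquiv.subsingleton
end
end Solid
end

/-! ### Tensor products, functionals, completeness -/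

noncomputable section
open CategoryTheory Opposite Limits TensorProduct
namespace Solid
variable {R : Type} [CommRing R]

/-- The map `T ⊗ M → T` induced by `φ` is surjective, as its cokernel is `T ⊗ (R ⧸ im φ) = 0`. -/
lemma tensor_nontrivial {T : Type} [AddCommGroup T] [Module R T] [Nontrivial T]
    (hT : ∀ (r : R), r ≠ 0 → ∀ (M : Type) [AddCommGroup M] [Module R M], (∀ x : M, r • x = 0) →
        Subsingleton (T ⊗[R] M)) {M : Type} [AddCommGroup M] [Module R M] (φ : M →ₗ[R] R)
    (hφ : φ ≠ 0) : Nontrivial (T ⊗[R] M) := by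
  rw [← not_subsingleton_iff_nontrivial]
  intro h
  obtain ⟨x, hx⟩ : ∃ x, φ x ≠ 0 := by
    by_contra! hc
    exact hφ (LinearMap.ext hc)
  have hex := lTensor_exact T (f := φ) (g := (LinearMap.range φ).mkQ)
    (LinearMap.exact_iff.2 (by simp)) (Submodule.mkQ_surjective _)
  have hsub : Subsingleton (T ⊗[R] (R ⧸ LinearMap.range φ)) := by
    refine hT (φ x) hx _ fun z => ?_
    obtain ⟨z, rfl⟩ := Submodule.mkQ_surjective _ z
    rw [← map_smul, Submodule.mkQ_apply, Submodule.Quotient.mk_eq_zero]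
    exact ⟨z • x, by simp [mul_comm]⟩
  have hs := exact_surjective hex hsub
  have : Subsingleton (T ⊗[R] R) := hs.subsingleton
  exact not_subsingleton T (TensorProduct.rid R T).symm.toEquiv.subsingleton

lemma smul_surjective_of_tensor {T : Type} [AddCommGroup T] [Module R T]
    (hT : ∀ (r : R), r ≠ 0 → ∀ (M : Type) [AddCommGroup M] [Module R M], (∀ x : M, r • x = 0) →
        Subsingleton (T ⊗[R] M)) {r : R} (hr : r ≠ 0) (t : T) : ∃ u : T, r • u = t := by
  have hex := lTensor_exact T (f := (r • LinearMap.id : R →ₗ[R] R))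
    (g := (LinearMap.range (r • LinearMap.id : R →ₗ[R] R)).mkQ)
    (LinearMap.exact_iff.2 (by simp)) (Submodule.mkQ_surjective _)
  have hs := exact_surjective hex (hT r hr _ fun z => by
    obtain ⟨z, rfl⟩ := Submodule.mkQ_surjective _ z
    rw [← map_smul, Submodule.mkQ_apply, Submodule.Quotient.mk_eq_zero]
    exact ⟨z, by simp⟩)
  obtain ⟨w, hw⟩ := hs (t ⊗ₜ 1)
  refine ⟨TensorProduct.rid R T w, ?_⟩
  rw [LinearMap.lTensor_smul, LinearMap.lTensor_id] at hw
  rw [← map_smul]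
  have : r • w = t ⊗ₜ[R] (1 : R) := hw
  rw [this, TensorProduct.rid_tmul, one_smul]

/-- A finitely generated torsion-free module over a domain has enough functionals: embed it into
a vector space over the fraction field and clear denominators. -/
lemma exists_functional [IsDomain R] {W : Type} [AddCommGroup W] [Module R W] [Module.Finite R W]
    (htf : ∀ (r : R) (w : W), r ≠ 0 → r • w = 0 → w = 0) {g : W} (hg : g ≠ 0) :
    ∃ h : W →ₗ[R] R, h g ≠ 0 := by
  let S := nonZeroDivisors R
  let K := FractionRing R
  let V := LocalizedModule S W
  let _ : Module K V := inferInstanceAs (Module (Localization S) (LocalizedModule S W))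
  have : IsScalarTower R K V :=
    inferInstanceAs (IsScalarTower R (Localization S) (LocalizedModule S W))
  let ι : W →ₗ[R] V := LocalizedModule.mkLinearMap S W
  have hι : ι g ≠ 0 := by
    intro h
    obtain ⟨c, hc⟩ := (IsLocalizedModule.eq_zero_iff S ι).1 h
    exact hg (htf c g (nonZeroDivisors.ne_zero c.2) hc)
  obtain ⟨f, hf⟩ := Module.Projective.exists_dual_ne_zero K hι
  let F : W →ₗ[R] K := f.restrictScalars R ∘ₗ ι
  obtain ⟨s, hs⟩ := (Module.finite_def (R := R) (M := W)).1 inferInstance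
  obtain ⟨b, hb⟩ := IsLocalization.exist_integer_multiples S s F
  have hle : LinearMap.range ((b : R) • F) ≤ LinearMap.range (Algebra.linearMap R K) := by
    rw [LinearMap.range_eq_map, ← hs, Submodule.map_span_le]
    intro w hw
    obtain ⟨r, hr⟩ := hb w hw
    exact ⟨r, hr⟩
  have hinj : Function.Injective (Algebra.linearMap R K) := IsFractionRing.injective R K
  let e := LinearEquiv.ofInjective _ hinj
  let h : W →ₗ[R] R := e.symm.toLinearMap ∘ₗ
    LinearMap.codRestrict _ ((b : R) • F) (fun w => hle ⟨w, rfl⟩)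
  refine ⟨h, fun h0 => ?_⟩
  have : ((b : R) • F) g = 0 := by
    have h1 := (LinearEquiv.map_eq_zero_iff e.symm).1 h0
    exact congrArg Subtype.val h1
  have h2 : (b : R) • F g = 0 := this
  rw [Algebra.smul_def] at h2
  rcases mul_eq_zero.1 h2 with h3 | h3
  · exact nonZeroDivisors.ne_zero b.2 (hinj (h3.trans (map_zero _).symm))
  · exact hf h3

lemma isPrecomplete_pi (I : Ideal R) [IsPrecomplete I R] (n : ℕ) :
    IsPrecomplete I (Fin n → R) := by
  have key : ∀ (J : Ideal R) (x : Fin n → R), x ∈ (J • ⊤ : Submodule R (Fin n → R)) ↔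
      ∀ i, x i ∈ (J • ⊤ : Submodule R R) := by
    intro J x
    constructor
    · intro hx i
      have : LinearMap.proj (R := R) (φ := fun _ : Fin n => R) i x ∈
          (J • ⊤ : Submodule R (Fin n → R)).map (LinearMap.proj i) := ⟨x, hx, rfl⟩
      rw [Submodule.map_smul''] at this
      exact Submodule.smul_mono le_rfl le_top this
    · intro hx
      rw [pi_eq_sum_univ' x]
      refine sum_mem fun i _ => ?_
      have := hx i
      rw [smul_eq_mul, Ideal.mul_top] at this
      exact Submodule.smul_mem_smul this trivial
  refine ⟨fun f hf => ?_⟩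
  have h : ∀ i, ∃ L : R, ∀ k, f k i ≡ L [SMOD (I ^ k • ⊤ : Submodule R R)] := fun i =>
    IsPrecomplete.prec ‹_› (f := fun k => f k i) fun {a b} hab => by
      have := hf hab
      rw [SModEq.sub_mem] at this ⊢
      exact (key _ _).1 this i
  choose L hL using h
  refine ⟨L, fun k => ?_⟩
  rw [SModEq.sub_mem, key]
  intro i
  have := hL i k
  rwa [SModEq.sub_mem] at this
end Solid
end

/-! ### Matlis duality -/

noncomputable section
open CategoryTheory Opposite Limits TensorProduct
namespace Solid
variable {R : Type} [CommRing R]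

lemma exists_extension {E : Type} [AddCommGroup E] [Module R E] [hE : Module.Injective R E]
    {X Y : Type} [AddCommGroup X] [Module R X] [AddCommGroup Y] [Module R Y] (f : X →ₗ[R] Y)
    (hf : Function.Injective f) (g : X →ₗ[R] E) : ∃ h : Y →ₗ[R] E, ∀ x, h (f x) = g x :=
  hE.out f hf g

section
variable [IsLocalRing R]
open IsLocalRing

/-- The injective hull `E` of the residue field: an injective module with an element `e` killed by
the maximal ideal which lies in every nonzero submodule. It is obtained as a maximal essential
extension of `R e` inside an injective module; such an extension is a direct summand. -/
lemma exists_hull : ∃ (E : Type) (_ : AddCommGroup E) (_ : Module R E) (_ : Module.Injective R E)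
    (e : E), e ≠ 0 ∧ (∀ r ∈ maximalIdeal R, r • e = 0) ∧ ∀ v : E, v ≠ 0 → ∃ r : R, r • v = e := by
  obtain ⟨E0, _, _, hE0, f, hf⟩ := exists_injective_embedding R (R ⧸ maximalIdeal R)
  have : Nontrivial (R ⧸ maximalIdeal R) :=
    Ideal.Quotient.nontrivial_iff.2 (maximalIdeal.isMaximal R).ne_top
  set e0 : E0 := f 1 with he0
  have he0_ne : e0 ≠ 0 := by
    rw [he0, Ne, map_eq_zero_iff f hf]
    exact one_ne_zero
  have he0_kill : ∀ r ∈ maximalIdeal R, r • e0 = 0 := by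
    intro r hr
    rw [he0, ← map_smul]
    have : r • (1 : R ⧸ maximalIdeal R) = 0 := by
      have h1 : (Ideal.Quotient.mk (maximalIdeal R)) (r * 1) = 0 := by
        rwa [Ideal.Quotient.eq_zero_iff_mem, mul_one]
      rw [map_mul] at h1
      exact h1
    rw [this, map_zero]
  -- A maximal essential extension of `R e0` in `E0`.
  obtain ⟨E, -, hE⟩ := zorn_le_nonempty₀
    {V : Submodule R E0 | e0 ∈ V ∧ ∀ v ∈ V, v ≠ 0 → ∃ r : R, r • v = e0} (by
      intro c hc hchain y hy
      refine ⟨sSup c, ⟨?_, ?_⟩, fun z hz => le_sSup hz⟩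
      · exact le_sSup hy (hc hy).1
      · intro v hv hv0
        rw [Submodule.mem_sSup_of_directed ⟨y, hy⟩ hchain.directedOn] at hv
        obtain ⟨z, hz, hvz⟩ := hv
        exact (hc hz).2 v hvz hv0) (Submodule.span R {e0}) ⟨Submodule.mem_span_singleton_self e0, by
      intro v hv hv0
      obtain ⟨s, rfl⟩ := Submodule.mem_span_singleton.1 hv
      have hs : IsUnit s := by
        by_contra hs
        exact hv0 (he0_kill s ((mem_maximalIdeal s).2 hs))
      obtain ⟨u, rfl⟩ := hs
      exact ⟨(u⁻¹ : Rˣ), by rw [smul_smul, Units.inv_mul, one_smul]⟩⟩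
  -- A maximal submodule avoiding `e0`.
  obtain ⟨C, -, hC⟩ := zorn_le_nonempty₀ {V : Submodule R E0 | e0 ∉ V} (by
      intro c hc hchain y hy
      refine ⟨sSup c, fun hv => ?_, fun z hz => le_sSup hz⟩
      rw [Submodule.mem_sSup_of_directed ⟨y, hy⟩ hchain.directedOn] at hv
      obtain ⟨z, hz, hvz⟩ := hv
      exact hc hz hvz) ⊥ (by simpa using he0_ne)
  have hCess : ∀ w : E0 ⧸ C, w ≠ 0 → ∃ r : R, r • w = C.mkQ e0 := by
    intro w hw
    obtain ⟨w, rfl⟩ := Submodule.mkQ_surjective _ w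
    have hw' : w ∉ C := fun h => hw (by rwa [Submodule.mkQ_apply, Submodule.Quotient.mk_eq_zero])
    have : e0 ∈ C ⊔ Submodule.span R {w} := by
      by_contra hn
      exact hw' (hC.2 hn le_sup_left (Submodule.mem_sup_right (Submodule.mem_span_singleton_self w)))
    obtain ⟨a, ha, b, hb, hab⟩ := Submodule.mem_sup.1 this
    obtain ⟨r, rfl⟩ := Submodule.mem_span_singleton.1 hb
    refine ⟨r, ?_⟩
    rw [← hab, map_add, map_smul, Submodule.mkQ_apply, Submodule.mkQ_apply,
      (Submodule.Quotient.mk_eq_zero C).2 ha, zero_add]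
  have hinj : Function.Injective (C.mkQ ∘ₗ E.subtype) := by
    rw [injective_iff_map_eq_zero]
    rintro ⟨v, hv⟩ h
    have h : v ∈ C := (Submodule.Quotient.mk_eq_zero C).1 h
    by_contra hne
    obtain ⟨r, hr⟩ := hE.1.2 v hv (fun h0 => hne (Subtype.ext h0))
    exact hC.1 (hr ▸ C.smul_mem r h)
  obtain ⟨ψ, hψ⟩ := exists_extension (C.mkQ ∘ₗ E.subtype) hinj E.subtype
  have hψ0 : ψ (C.mkQ e0) = e0 := hψ ⟨e0, hE.1.1⟩
  have hrange : LinearMap.range ψ ≤ E := by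
    refine hE.2 ⟨⟨_, hψ0⟩, ?_⟩ fun v hv => ⟨_, hψ ⟨v, hv⟩⟩
    rintro _ ⟨w, rfl⟩ hw
    obtain ⟨r, hr⟩ := hCess w (by
      rintro rfl
      exact hw (map_zero _))
    exact ⟨r, by rw [← map_smul, hr, hψ0]⟩
  let ρ : E0 →ₗ[R] E := (LinearMap.codRestrict E ψ fun w => hrange ⟨w, rfl⟩) ∘ₗ C.mkQ
  have hρ : ∀ v : E, ρ v = v := fun v => Subtype.ext (hψ v)
  refine ⟨E, inferInstance, inferInstance, ⟨?_⟩, ⟨e0, hE.1.1⟩, ?_, ?_, ?_⟩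
  · intro X Y _ _ _ _ g hg h
    obtain ⟨h', hh'⟩ := exists_extension g hg (E.subtype ∘ₗ h)
    exact ⟨ρ ∘ₗ h', fun x => by rw [LinearMap.comp_apply, hh']; exact hρ _⟩
  · exact fun h => he0_ne (congrArg Subtype.val h)
  · exact fun r hr => Subtype.ext (he0_kill r hr)
  · rintro ⟨v, hv⟩ hne
    obtain ⟨r, hr⟩ := hE.1.2 v hv (fun h0 => hne (Subtype.ext h0))
    exact ⟨r, Subtype.ext hr⟩

section
variable {E : Type} [AddCommGroup E] [Module R E] [hE : Module.Injective R E] {e : E}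

/-- The injective hull of the residue field is a cogenerator. -/
lemma exists_hom_ne_zero (he : e ≠ 0) (hk : ∀ r ∈ maximalIdeal R, r • e = 0) {W : Type}
    [AddCommGroup W] [Module R W] {w : W} (hw : w ≠ 0) : ∃ f : W →ₗ[R] E, f w ≠ 0 := by
  let I := LinearMap.ker (LinearMap.toSpanSingleton R W w)
  have hI : I ≤ LinearMap.ker (LinearMap.toSpanSingleton R E e) := by
    intro r hr
    have hr' : r • w = 0 := by simpa [I] using hr
    have : r ∈ maximalIdeal R := by
      rw [mem_maximalIdeal, mem_nonunits_iff]
      intro hu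
      exact hw (hu.smul_eq_zero.1 hr')
    simpa using hk r this
  obtain ⟨f, hf⟩ := exists_extension
    (Submodule.liftQ I (LinearMap.toSpanSingleton R W w) le_rfl)
    (LinearMap.ker_eq_bot.1 (Submodule.ker_liftQ_eq_bot _ _ _ le_rfl))
    (Submodule.liftQ I (LinearMap.toSpanSingleton R E e) hI)
  refine ⟨f, ?_⟩
  have := hf (Submodule.Quotient.mk 1)
  simp only [Submodule.liftQ_apply, LinearMap.toSpanSingleton_apply, one_smul] at this
  rwa [this]

variable [IsNoetherianRing R]

/-- Every endomorphism of the injective hull is a scalar modulo the maximal ideal `(x_1, …, x_s)`: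
after subtracting a scalar it kills the socle, hence factors through `(x_1, …, x_s) : E → E ^ s`. -/
lemma exists_scalar (he : e ≠ 0) (hk : ∀ r ∈ maximalIdeal R, r • e = 0)
    (hess : ∀ v : E, v ≠ 0 → ∃ r : R, r • v = e) (h : E →ₗ[R] E) :
    ∃ r : R, h - r • LinearMap.id ∈ (maximalIdeal R • ⊤ : Submodule R (E →ₗ[R] E)) := by
  have soc : ∀ v : E, (∀ r ∈ maximalIdeal R, r • v = 0) → ∃ r : R, v = r • e := by
    intro v hv
    by_cases hv0 : v = 0
    · exact ⟨0, by rw [hv0, zero_smul]⟩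
    · obtain ⟨r, hr⟩ := hess v hv0
      have hu : IsUnit r := by
        by_contra hu
        exact he (hr ▸ hv r ((mem_maximalIdeal r).2 hu))
      obtain ⟨u, rfl⟩ := hu
      exact ⟨(u⁻¹ : Rˣ), by rw [← hr, smul_smul, Units.inv_mul, one_smul]⟩
  obtain ⟨r, hr⟩ := soc (h e) (fun s hs => by rw [← map_smul, hk s hs, map_zero])
  refine ⟨r, ?_⟩
  set g := h - r • LinearMap.id with hg
  have hge : g e = 0 := by simp [hg, hr]
  obtain ⟨s, x, hx⟩ := Submodule.fg_iff_exists_fin_generating_family.1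
    (IsNoetherian.noetherian (maximalIdeal R))
  let F : E →ₗ[R] (Fin s → E) := LinearMap.pi fun i => x i • LinearMap.id
  have hF : LinearMap.ker F ≤ LinearMap.ker g := by
    intro v hv
    have hv' : ∀ i, x i • v = 0 := fun i => congrFun (LinearMap.mem_ker.1 hv) i
    have : maximalIdeal R ≤ Ideal.torsionOf R E v := by
      rw [← hx, Submodule.span_le]
      rintro _ ⟨i, rfl⟩
      exact hv' i
    obtain ⟨c, rfl⟩ := soc v fun r hr => this hr
    rw [LinearMap.mem_ker, map_smul, hge, smul_zero]
  obtain ⟨G, hG⟩ := exists_extension (Submodule.liftQ (LinearMap.ker F) F le_rfl)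
    (LinearMap.ker_eq_bot.1 (Submodule.ker_liftQ_eq_bot _ _ _ le_rfl))
    (Submodule.liftQ (LinearMap.ker F) g hF)
  have : g = ∑ i, x i • (G ∘ₗ LinearMap.single R (fun _ : Fin s => E) i) := by
    ext v
    have h1 := hG (Submodule.Quotient.mk v)
    simp only [Submodule.liftQ_apply] at h1
    rw [← h1, LinearMap.sum_apply]
    have h2 : F v = ∑ i, x i • LinearMap.single R (fun _ : Fin s => E) i v := by
      ext j
      simp [F, Finset.sum_apply, Pi.single_apply]
    rw [h2, map_sum]
    simp
  rw [this]
  refine sum_mem fun i _ => Submodule.smul_mem_smul ?_ trivial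
  rw [← hx]
  exact Submodule.subset_span ⟨i, rfl⟩

/-- The Matlis dual of an Artinian `m`-torsion module over a complete local ring is finitely
generated. -/
lemma finite_dual [IsPrecomplete (maximalIdeal R) R] (he : e ≠ 0)
    (hk : ∀ r ∈ maximalIdeal R, r • e = 0) (hess : ∀ v : E, v ≠ 0 → ∃ r : R, r • v = e)
    (T : Type) [AddCommGroup T] [Module R T] [IsArtinian R T] (hT : Tors (maximalIdeal R) T) :
    Module.Finite R (T →ₗ[R] E) := by
  -- By the descending chain condition finitely many functionals embed `T` into a power of `E`.
  obtain ⟨n, f, hf⟩ : ∃ (n : ℕ) (f : Fin n → (T →ₗ[R] E)),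
      Function.Injective (LinearMap.pi f) := by
    obtain ⟨_, ⟨n, f, rfl⟩, hmin⟩ := IsArtinian.set_has_minimal (R := R) (M := T)
      {L | ∃ (n : ℕ) (f : Fin n → (T →ₗ[R] E)), L = LinearMap.ker (LinearMap.pi f)}
      ⟨_, 0, Fin.elim0, rfl⟩
    refine ⟨n, f, ?_⟩
    rw [injective_iff_map_eq_zero]
    intro t ht
    by_contra ht0
    obtain ⟨g, hg⟩ := exists_hom_ne_zero he hk ht0
    refine hmin _ ⟨n + 1, Fin.cons g f, rfl⟩ (lt_of_le_of_ne ?_ ?_)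
    · intro u hu
      rw [LinearMap.mem_ker] at hu ⊢
      ext i
      exact congrFun hu i.succ
    · intro heq
      have : t ∈ LinearMap.ker (LinearMap.pi (Fin.cons g f : Fin (n + 1) → (T →ₗ[R] E))) := by
        rw [heq]
        exact ht
      exact hg (congrFun (LinearMap.mem_ker.1 this) 0)
  have hpre := isPrecomplete_pi (maximalIdeal R) n
  have hhaus : IsHausdorff (maximalIdeal R) (T →ₗ[R] E) := by
    refine ⟨fun g hg => ?_⟩
    ext t
    obtain ⟨k, hk⟩ := hT t
    have := hg k
    rw [SModEq.zero] at this
    rw [LinearMap.zero_apply]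
    refine Submodule.smul_induction_on (p := fun g => g t = 0) this ?_ ?_
    · intro r hr g _
      rw [LinearMap.smul_apply, ← map_smul, hk r hr, map_zero]
    · intro a b ha hb
      rw [LinearMap.add_apply, ha, hb, add_zero]
  let Φ : (Fin n → R) →ₗ[R] (T →ₗ[R] E) := Fintype.linearCombination R f
  have hΦ : Function.Surjective Φ := by
    refine surjective_of_mkQ_comp_surjective (I := maximalIdeal R) ?_
    intro g
    obtain ⟨g, rfl⟩ := Submodule.mkQ_surjective _ g
    obtain ⟨G, hG⟩ := exists_extension (LinearMap.pi f) hf g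
    choose c hc using fun i =>
      exists_scalar he hk hess (G ∘ₗ LinearMap.single R (fun _ : Fin n => E) i)
    refine ⟨c, ?_⟩
    rw [LinearMap.comp_apply, ← sub_eq_zero, ← map_sub, Submodule.mkQ_apply,
      Submodule.Quotient.mk_eq_zero, ← neg_mem_iff, neg_sub]
    have : g - Φ c = ∑ i, LinearMap.lcomp R E (f i)
        (G ∘ₗ LinearMap.single R (fun _ : Fin n => E) i - c i • LinearMap.id) := by
      ext t
      rw [LinearMap.sub_apply, ← hG t]
      have h2 : LinearMap.pi f t = ∑ i, LinearMap.single R (fun _ : Fin n => E) i (f i t) := by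
        ext j
        simp [Finset.sum_apply, Pi.single_apply]
      rw [h2, map_sum]
      simp [Φ, Fintype.linearCombination_apply, Finset.sum_sub_distrib]
    rw [this]
    refine sum_mem fun i _ => ?_
    have h3 : LinearMap.lcomp R E (f i)
        (G ∘ₗ LinearMap.single R (fun _ : Fin n => E) i - c i • LinearMap.id) ∈
        (maximalIdeal R • ⊤ : Submodule R (E →ₗ[R] E)).map (LinearMap.lcomp R E (f i)) :=
      ⟨_, hc i, rfl⟩
    rw [Submodule.map_smul''] at h3
    exact Submodule.smul_mono le_rfl le_top h3
  exact Module.Finite.of_surjective Φ hΦ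
end

/-- A nonzero map `T ⊗ M → E` corresponds to a nonzero map `M → Hom(T, E)`, whose target is finitely
generated and torsion-free. -/
lemma exists_hom_of_tensor [IsNoetherianRing R] [IsDomain R] [IsPrecomplete (maximalIdeal R) R]
    {T : Type} [AddCommGroup T] [Module R T] [IsArtinian R T] (hT : Tors (maximalIdeal R) T)
    (hT0 : ∀ (r : R), r ≠ 0 → ∀ (M : Type) [AddCommGroup M] [Module R M], (∀ x : M, r • x = 0) →
        Subsingleton (T ⊗[R] M)) {M : Type} [AddCommGroup M] [Module R M]
    (h : Nontrivial (T ⊗[R] M)) : ∃ φ : M →ₗ[R] R, φ ≠ 0 := by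
  obtain ⟨E, _, _, hE, e, he, hk, hess⟩ := exists_hull (R := R)
  obtain ⟨w, hw⟩ := exists_ne (0 : T ⊗[R] M)
  obtain ⟨F, hF⟩ := exists_hom_ne_zero he hk hw
  have hfin := finite_dual he hk hess T hT
  let G : M →ₗ[R] (T →ₗ[R] E) := (TensorProduct.curry F).flip
  obtain ⟨x, hx⟩ : ∃ x, G x ≠ 0 := by
    by_contra! hc
    refine hF ?_
    have : F = 0 := by
      ext t x
      exact LinearMap.congr_fun (hc x) t
    rw [this, LinearMap.zero_apply]
  obtain ⟨q, hq⟩ := exists_functional (W := T →ₗ[R] E) (fun r g hr hg => by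
    ext t
    obtain ⟨u, rfl⟩ := smul_surjective_of_tensor hT0 hr t
    rw [map_smul]
    exact LinearMap.congr_fun hg u) hx
  exact ⟨q ∘ₗ G, fun h0 => hq (LinearMap.congr_fun h0 x)⟩
end
end Solid
end

/-- Let `(R, m)` be a complete Noetherian local integral domain of Krull
dimension `d` and let `M` be an `R`-module. Then `M` is solid (there is a nonzero
`R`-module homomorphism `M → R`) if and only if the local cohomology module `H^d_m(M)`
is nonzero. -/
theorem statement6 (R : Type) [CommRing R] [IsLocalRing R] [IsNoetherianRing R] [IsDomain R]
    [IsAdicComplete (IsLocalRing.maximalIdeal R) R]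
    (d : ℕ) (hd : ringKrullDim R = d)
    (M : Type) [AddCommGroup M] [Module R M] :
    (∃ φ : M →ₗ[R] R, φ ≠ 0) ↔
      Nontrivial ((localCohomology (IsLocalRing.maximalIdeal R) d).obj (ModuleCat.of R M)) := by
  obtain ⟨T, _, _, hT1, hT2, hT3, hT4, hT5⟩ := Solid.exists_top (R := R) d hd
  obtain ⟨e⟩ := hT5 M
  rw [← not_subsingleton_iff_nontrivial, Solid.localCohomology_subsingleton_iff_LC,
    not_subsingleton_iff_nontrivial, e.toEquiv.nontrivial_congr]
  constructor
  · rintro ⟨φ, hφ⟩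
    exact Solid.tensor_nontrivial hT4 φ hφ
  · exact Solid.exists_hom_of_tensor hT3 hT4
end
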